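/- Let d ≥ 1, let ω ∈ ℝ^d be nonresonant, let h : ℝ × ℝ^d → ℝ be real analytic and 2π-periodic in each of the last d coordinates, let h₀(x) = (2π)^{−d} ∫_{[0,2π]^d} h(x,ψ) dψ, and let c₀ ∈ ℝ satisfy h₀(c₀) = 0 and a := h₀'(c₀) ≠ 0. Then there exist ε̄ > 0 and ζ̄ > 0 such that for every ε with 0 < |ε| < ε̄ and every ζ with |ζ| < ζ̄ there exist a function u(·, ε, ζ) : ℝ^d → ℝ, real analytic and 2π-periodic in each coordinate with zero mean value, and a constant R(ε, ζ) ∈ ℝ, such that the function x(t) = c₀ + ζ + u(ωt, ε, ζ) satisfies ε x''(t) + x'(t) + ε h(x(t), ωt) = ε R(ε, ζ) for all t ∈ ℝ. -/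

import Mathlib

open MeasureTheory Filter

set_option linter.unusedSectionVars false

namespace RangeEq

open Topology

section Flow

variable {K : Type*} [TopologicalSpace K] [AddCommGroup K] [IsTopologicalAddGroup K]
  [CompactSpace K] [FirstCountableTopology K]

/-- `f'` is the derivative of `f` along the flow `fl`. -/
def HasD {K E : Type*} [TopologicalSpace K] [AddCommGroup K] [NormedAddCommGroup E]
    [NormedSpace ℝ E] (fl : ℝ →+ K) (f f' : C(K, E)) : Prop :=
  ∀ y t, HasDerivAt (fun s => f (y + fl s)) (f' (y + fl t)) t

lemma HasD.add {E : Type*} [NormedAddCommGroup E] [NormedSpace ℝ E] {fl : ℝ →+ K}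
    {f f' g g' : C(K, E)} (hf : HasD fl f f') (hg : HasD fl g g') :
    HasD fl (f + g) (f' + g') := fun y t => by
  exact (hf y t).add (hg y t)

lemma HasD.sub {E : Type*} [NormedAddCommGroup E] [NormedSpace ℝ E] {fl : ℝ →+ K}
    {f f' g g' : C(K, E)} (hf : HasD fl f f') (hg : HasD fl g g') :
    HasD fl (f - g) (f' - g') := fun y t => by
  exact (hf y t).sub (hg y t)

lemma HasD.smul {fl : ℝ →+ K}
    {f f' : C(K, ℝ)} (c : ℝ) (hf : HasD fl f f') :
    HasD fl (c • f) (c • f') := fun y t => by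
  simpa using (hf y t).const_mul c

lemma HasD.csmul {fl : ℝ →+ K}
    {f f' : C(K, ℂ)} (c : ℂ) (hf : HasD fl f f') :
    HasD fl (c • f) (c • f') := fun y t => by
  simpa using (hf y t).const_mul c

lemma HasD.mul {fl : ℝ →+ K}
    {f f' g g' : C(K, ℝ)} (hf : HasD fl f f') (hg : HasD fl g g') :
    HasD fl (f * g) (f' * g + f * g') := fun y t => by
  exact (hf y t).mul (hg y t)

lemma HasD.congr {E : Type*} [NormedAddCommGroup E] [NormedSpace ℝ E] {fl : ℝ →+ K}
    {f f' g g' : C(K, E)} (hf : HasD fl f f') (h1 : f = g) (h2 : f' = g') : HasD fl g g' := by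
  subst h1 h2; exact hf

/-- translation of a continuous function -/
def tr {K : Type*} [TopologicalSpace K] [AddCommGroup K] [IsTopologicalAddGroup K]
    (θ : K) (f : C(K, ℝ)) : C(K, ℝ) := ⟨fun y => f (y + θ), by fun_prop⟩

@[simp] lemma tr_apply (θ y : K) (f : C(K, ℝ)) : tr θ f y = f (y + θ) := rfl

lemma HasD.tr {fl : ℝ →+ K} {f f' : C(K, ℝ)} (hf : HasD fl f f') (θ : K) :
    HasD fl (tr θ f) (tr θ f') := fun y t => by
  have := hf (y + θ) t
  simpa [add_right_comm] using this

/-- a priori estimate (maximum principle) -/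
lemma apriori {fl : ℝ →+ K} {f v : C(K, ℝ)} {μ : ℝ} (hμ : μ ≠ 0)
    (h : HasD fl v (f - μ • v)) : ‖v‖ ≤ ‖f‖ / |μ| := by
  have hμ' : 0 < |μ| := abs_pos.mpr hμ
  obtain ⟨y, -, hy⟩ := isCompact_univ.exists_isMaxOn (Set.univ_nonempty (α := K))
    (f := fun y => (v y) ^ 2) (by fun_prop)
  have h0 := h y 0
  have h1 := h0.pow 2
  have hmax : IsLocalMax (fun s => (v (y + fl s)) ^ 2) 0 := by
    refine Filter.Eventually.of_forall fun s => ?_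
    simpa using hy (Set.mem_univ (y + fl s))
  have h2 := hmax.hasDerivAt_eq_zero h1
  have key : |v y| ≤ ‖f‖ / |μ| := by
    simp at h2
    rcases h2 with h2 | h2
    · rw [h2]; simp; positivity
    · rw [le_div_iff₀ hμ', mul_comm, ← abs_mul, ← sub_eq_zero.mp h2]
      exact f.norm_coe_le_norm y
  rw [ContinuousMap.norm_le _ (by positivity)]
  intro z
  refine le_trans ?_ key
  exact sq_le_sq.mp (hy (Set.mem_univ z))

lemma uniq {fl : ℝ →+ K} {f v w : C(K, ℝ)} {μ : ℝ} (hμ : μ ≠ 0)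
    (h : HasD fl v (f - μ • v)) (h' : HasD fl w (f - μ • w)) : v = w := by
  have : HasD fl (v - w) (0 - μ • (v - w)) := (h.sub h').congr rfl (by rw [smul_sub]; abel)
  have := apriori hμ this
  simp at this
  exact sub_eq_zero.mp this

lemma exists_pos {fl : ℝ →+ K} (hfl : Continuous fl) (f : C(K, ℝ)) {μ : ℝ} (hμ : 0 < μ) :
    ∃ v, HasD fl v (f - μ • v) := by
  have hint : Integrable (fun s => Real.exp (-μ * s)) (volume.restrict (Set.Ioi (0:ℝ))) :=
    integrableOn_exp_mul_Ioi (by linarith) 0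
  have hcont : Continuous (fun y : K => ∫ s in Set.Ioi (0:ℝ), Real.exp (-μ * s) * f (y - fl s)) := by
    refine continuous_of_dominated (bound := fun s => Real.exp (-μ * s) * ‖f‖) ?_ ?_ ?_ ?_
    · intro y
      apply Continuous.aestronglyMeasurable
      fun_prop
    · intro y
      refine Filter.Eventually.of_forall fun s => ?_
      rw [norm_mul, Real.norm_of_nonneg (Real.exp_pos _).le]
      gcongr
      exact f.norm_coe_le_norm _
    · exact hint.mul_const _
    · refine Filter.Eventually.of_forall fun s => ?_
      fun_prop
  refine ⟨⟨_, hcont⟩, ?_⟩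
  intro y t
  set F : ℝ → ℝ := fun r => Real.exp (μ * r) * f (y + fl r) with hF
  have hFc : Continuous F := by fun_prop
  have hFi : IntegrableOn F (Set.Iic 0) := by
    have h1 : IntegrableOn (fun s => Real.exp (μ * s)) (Set.Iic (0:ℝ)) :=
      integrableOn_exp_mul_Iic hμ 0
    refine (h1.mul_const ‖f‖).mono' hFc.aestronglyMeasurable ?_
    refine Filter.Eventually.of_forall fun s => ?_
    rw [hF, norm_mul, Real.norm_of_nonneg (Real.exp_pos _).le]
    gcongr
    exact f.norm_coe_le_norm _
  have hFi' : ∀ s, IntegrableOn F (Set.Iic s) := by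
    intro s
    rcases le_total s 0 with h | h
    · exact hFi.mono_set (Set.Iic_subset_Iic.mpr h)
    · rw [← Set.Iic_union_Icc_eq_Iic h]
      exact hFi.union (hFc.continuousOn.integrableOn_Icc)
  have hv : ∀ s, (∫ r in Set.Ioi (0:ℝ), Real.exp (-μ * r) * f (y + fl s - fl r))
      = Real.exp (-μ * s) * ((∫ r in Set.Iic (0:ℝ), F r) + ∫ r in (0:ℝ)..s, F r) := by
    intro s
    rw [← intervalIntegral.integral_Iic_sub_Iic (hFi' 0) (hFi' s)]
    rw [add_sub_cancel, ← integral_const_mul]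
    have := integral_comp_neg_Ioi (0:ℝ) (fun r => Real.exp (μ * r) * f (y + fl s + fl r))
    have e1 : (∫ r in Set.Ioi (0:ℝ), Real.exp (-μ * r) * f (y + fl s - fl r))
       = ∫ r in Set.Iic (0:ℝ), Real.exp (μ * r) * f (y + fl s + fl r) := by
      rw [neg_zero] at this
      rw [← this]
      simp [sub_eq_add_neg]
    rw [e1]
    have h2 := (measurePreserving_add_right volume s).setIntegral_preimage_emb
      (MeasurableEquiv.addRight s).measurableEmbedding
      (fun r => Real.exp (-μ * s) * F r) (Set.Iic s)
    rw [← h2]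
    simp only [Set.preimage_add_const_Iic, sub_self]
    refine setIntegral_congr_fun measurableSet_Iic fun r _ => ?_
    simp only [hF]
    rw [← mul_assoc, ← Real.exp_add, map_add fl, add_comm (fl r), add_assoc]
    congr 2
    ring
  have hd : HasDerivAt (fun s => Real.exp (-μ * s) *
      ((∫ r in Set.Iic (0:ℝ), F r) + ∫ r in (0:ℝ)..s, F r))
      (Real.exp (-μ * t) * (-μ) * ((∫ r in Set.Iic (0:ℝ), F r) + ∫ r in (0:ℝ)..t, F r)
        + Real.exp (-μ * t) * F t) t := by
    have h1 : HasDerivAt (fun s : ℝ => Real.exp (-μ * s)) (Real.exp (-μ * t) * (-μ)) t := by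
      simpa using ((hasDerivAt_id t).const_mul (-μ)).exp
    have h2 : HasDerivAt (fun s => ∫ r in (0:ℝ)..s, F r) (F t) t :=
      intervalIntegral.integral_hasDerivAt_right (hFc.intervalIntegrable _ _)
        hFc.stronglyMeasurable.stronglyMeasurableAtFilter hFc.continuousAt
    exact h1.mul (h2.const_add _)
  simp only [ContinuousMap.coe_mk, ContinuousMap.sub_apply, ContinuousMap.smul_apply, smul_eq_mul]
  simp_rw [hv]
  refine hd.congr_deriv ?_
  have : Real.exp (-μ * t) * F t = f (y + fl t) := by
    simp only [hF]
    rw [← mul_assoc, ← Real.exp_add]; simp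
  rw [this]; ring

lemma exists_sol {fl : ℝ →+ K} (hfl : Continuous fl) (f : C(K, ℝ)) {μ : ℝ} (hμ : μ ≠ 0) :
    ∃ v, HasD fl v (f - μ • v) := by
  rcases lt_or_gt_of_ne hμ with h | h
  · obtain ⟨v, hv⟩ := exists_pos (fl := -fl) (by exact hfl.neg) f (neg_pos.mpr h)
    refine ⟨-v, fun y t => ?_⟩
    have h1 : HasDerivAt (fun s => v (y + (-fl) s)) ((f - (-μ) • v) (y + (-fl) (-t))) (-t) :=
      hv y (-t)
    have h2 := (h1.scomp t (hasDerivAt_neg t)).neg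
    refine (HasDerivAt.congr_deriv h2 ?_).congr_of_eventuallyEq ?_
    · simp
    · exact Filter.Eventually.of_forall fun s => by simp
  · exact exists_pos hfl f h

/-- the resolvent `(D + μ)⁻¹` -/
noncomputable def res (fl : ℝ →+ K) (hfl : Continuous fl) {μ : ℝ} (hμ : μ ≠ 0) :
    C(K, ℝ) →L[ℝ] C(K, ℝ) :=
  LinearMap.mkContinuous
    { toFun := fun f => (exists_sol hfl f hμ).choose
      map_add' := fun f g => by
        refine uniq hμ (exists_sol hfl (f + g) hμ).choose_spec ?_
        refine ((exists_sol hfl f hμ).choose_spec.add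
          (exists_sol hfl g hμ).choose_spec).congr rfl ?_
        rw [smul_add]; abel
      map_smul' := fun c f => by
        refine uniq hμ (exists_sol hfl (c • f) hμ).choose_spec ?_
        refine ((exists_sol hfl f hμ).choose_spec.smul c).congr rfl ?_
        simp only [RingHom.id_apply]
        rw [smul_sub, smul_comm c μ] } (1 / |μ|) (fun f => by
        rw [one_div_mul_eq_div]
        exact apriori hμ (exists_sol hfl f hμ).choose_spec)

lemma res_spec (fl : ℝ →+ K) (hfl : Continuous fl) {μ : ℝ} (hμ : μ ≠ 0) (f : C(K, ℝ)) :
    HasD fl (res fl hfl hμ f) (f - μ • res fl hfl hμ f) :=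
  (exists_sol hfl f hμ).choose_spec

lemma res_unique (fl : ℝ →+ K) (hfl : Continuous fl) {μ : ℝ} (hμ : μ ≠ 0) {f v : C(K, ℝ)}
    (h : HasD fl v (f - μ • v)) : v = res fl hfl hμ f := uniq hμ h (res_spec fl hfl hμ f)

lemma res_bound (fl : ℝ →+ K) (hfl : Continuous fl) {μ : ℝ} (hμ : μ ≠ 0) (f : C(K, ℝ)) :
    ‖res fl hfl hμ f‖ ≤ ‖f‖ / |μ| := apriori hμ (res_spec fl hfl hμ f)

lemma res_tr (fl : ℝ →+ K) (hfl : Continuous fl) {μ : ℝ} (hμ : μ ≠ 0) (f : C(K, ℝ)) (θ : K) :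
    tr θ (res fl hfl hμ f) = res fl hfl hμ (tr θ f) := by
  apply res_unique
  exact ((res_spec fl hfl hμ f).tr θ).congr rfl (by ext; simp)

lemma res_comm (fl : ℝ →+ K) (hfl : Continuous fl) {μ ν : ℝ} (hμ : μ ≠ 0) (hν : ν ≠ 0)
    (f : C(K, ℝ)) :
    res fl hfl hμ (res fl hfl hν f) = res fl hfl hν (res fl hfl hμ f) := by
  set w := res fl hfl hν f with hw
  set v := res fl hfl hμ w with hv
  have h1 : HasD fl w (f - ν • w) := res_spec fl hfl hν f
  have h2 : HasD fl v (w - μ • v) := res_spec fl hfl hμ w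
  have h3 : w + (ν - μ) • v = res fl hfl hμ f := by
    apply res_unique
    refine (h1.add (h2.smul (ν - μ))).congr rfl ?_
    ext y; simp; ring
  rw [← h3]
  apply res_unique
  refine h2.congr rfl ?_
  ext y; simp; ring

lemma res_D (fl : ℝ →+ K) (hfl : Continuous fl) {μ : ℝ} (hμ : μ ≠ 0) {G G' : C(K, ℝ)}
    (hG : HasD fl G G') : ‖res fl hfl hμ G'‖ ≤ 2 * ‖G‖ := by
  have : G - μ • res fl hfl hμ G = res fl hfl hμ G' := by
    apply res_unique
    exact (hG.sub ((res_spec fl hfl hμ G).smul μ)).congr rfl rfl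
  rw [← this]
  have h1 := res_bound fl hfl hμ G
  have hμ' : 0 < |μ| := abs_pos.mpr hμ
  rw [le_div_iff₀ hμ'] at h1
  calc _ ≤ ‖G‖ + ‖μ • res fl hfl hμ G‖ := norm_sub_le _ _
    _ = ‖G‖ + ‖res fl hfl hμ G‖ * |μ| := by rw [norm_smul, Real.norm_eq_abs, mul_comm]
    _ ≤ _ := by linarith

end Flow

section Mean

variable {K : Type*} [TopologicalSpace K] [AddCommGroup K] [IsTopologicalAddGroup K]
  [CompactSpace K] [FirstCountableTopology K] [MeasurableSpace K] [BorelSpace K]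
  (vol : Measure K) [IsProbabilityMeasure vol] [vol.IsAddLeftInvariant]

lemma integrable_cm (f : C(K, ℝ)) : Integrable (fun y => f y) vol :=
  (integrable_const ‖f‖).mono' f.continuous.aestronglyMeasurable
    (Filter.Eventually.of_forall fun y => f.norm_coe_le_norm y)

/-- mean value -/
noncomputable def mean : C(K, ℝ) →L[ℝ] ℝ :=
  LinearMap.mkContinuous
    { toFun := fun f => ∫ y, f y ∂vol
      map_add' := fun f g => integral_add (integrable_cm vol f) (integrable_cm vol g)
      map_smul' := fun c f => by simp [integral_const_mul] } 1 (fun f => by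
        have := norm_integral_le_of_norm_le_const (μ := vol) (f := fun y => f y) (C := ‖f‖)
          (Filter.Eventually.of_forall fun y => f.norm_coe_le_norm y)
        simpa using this)

lemma mean_apply (f : C(K, ℝ)) : mean vol f = ∫ y, f y ∂vol := rfl

lemma mean_le (f : C(K, ℝ)) : |mean vol f| ≤ ‖f‖ := by
  have := norm_integral_le_of_norm_le_const (μ := vol) (f := fun y => f y) (C := ‖f‖)
          (Filter.Eventually.of_forall fun y => f.norm_coe_le_norm y)
  simpa [mean_apply] using this

lemma mean_one : mean vol 1 = 1 := by simp [mean_apply]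

lemma mean_tr (f : C(K, ℝ)) (θ : K) : mean vol (tr θ f) = mean vol f := by
  simp only [mean_apply, tr_apply]
  exact integral_add_right_eq_self (fun y => f y) θ

lemma mean_D {fl : ℝ →+ K} {f f' : C(K, ℝ)} (h : HasD fl f f') : mean vol f' = 0 := by
  have h1 : HasDerivAt (fun t => ∫ y, f (y + fl t) ∂vol) (∫ y, f' (y + fl 0) ∂vol) 0 := by
    refine (hasDerivAt_integral_of_dominated_loc_of_deriv_le (μ := vol) (s := Set.univ)
      (F := fun t y => f (y + fl t)) (F' := fun t y => f' (y + fl t)) (bound := fun _ => ‖f'‖)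
      Filter.univ_mem ?_ ?_ ?_ ?_ ?_ ?_).2
    · exact Filter.Eventually.of_forall fun t =>
        Continuous.aestronglyMeasurable (by fun_prop)
    · exact integrable_cm vol (tr (fl 0) f)
    · exact Continuous.aestronglyMeasurable (by fun_prop)
    · exact Filter.Eventually.of_forall fun y t _ => f'.norm_coe_le_norm _
    · exact integrable_const _
    · exact Filter.Eventually.of_forall fun y t _ => h y t
  have h2 : (fun t => ∫ y, f (y + fl t) ∂vol) = fun _ => mean vol f := by
    funext t; exact mean_tr vol f (fl t)
  rw [h2] at h1
  have := h1.unique (hasDerivAt_const _ _)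
  simpa [mean_apply] using this

/-- projection onto zero mean functions -/
noncomputable def proj : C(K, ℝ) →L[ℝ] C(K, ℝ) :=
  ContinuousLinearMap.id ℝ _ - (mean vol).smulRight (1 : C(K, ℝ))

lemma proj_apply (f : C(K, ℝ)) : proj vol f = f - mean vol f • (1 : C(K, ℝ)) := rfl

lemma mean_proj (f : C(K, ℝ)) : mean vol (proj vol f) = 0 := by
  simp [proj_apply, mean_one]

lemma proj_of_mean {f : C(K, ℝ)} (h : mean vol f = 0) : proj vol f = f := by
  simp [proj_apply, h]

lemma proj_le (f : C(K, ℝ)) : ‖proj vol f‖ ≤ 2 * ‖f‖ := by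
  rw [proj_apply]
  have := mean_le vol f
  calc _ ≤ ‖f‖ + ‖mean vol f • (1 : C(K, ℝ))‖ := norm_sub_le _ _
    _ = ‖f‖ + |mean vol f| * ‖(1 : C(K, ℝ))‖ := by rw [norm_smul, Real.norm_eq_abs]
    _ ≤ ‖f‖ + |mean vol f| * 1 := by gcongr; exact norm_one.le
    _ ≤ _ := by linarith

lemma proj_tr (f : C(K, ℝ)) (θ : K) : tr θ (proj vol f) = proj vol (tr θ f) := by
  rw [proj_apply, proj_apply, mean_tr]; ext; simp

/-- the solution operator `(D + μ₁)⁻¹ (D + μ₂)⁻¹` -/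
noncomputable def sol {K : Type*} [TopologicalSpace K] [AddCommGroup K] [IsTopologicalAddGroup K]
    [CompactSpace K] [FirstCountableTopology K]
    (fl : ℝ →+ K) (hfl : Continuous fl) {μ₁ μ₂ : ℝ} (h1 : μ₁ ≠ 0) (h2 : μ₂ ≠ 0) :
    C(K, ℝ) →L[ℝ] C(K, ℝ) := (res fl hfl h1).comp (res fl hfl h2)

section sol

variable (fl : ℝ →+ K) (hfl : Continuous fl) {μ₁ μ₂ : ℝ} (h1 : μ₁ ≠ 0) (h2 : μ₂ ≠ 0)

lemma sol_apply (f : C(K, ℝ)) :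
    sol fl hfl h1 h2 f = res fl hfl h1 (res fl hfl h2 f) := rfl

lemma sol_tr (f : C(K, ℝ)) (θ : K) :
    tr θ (sol fl hfl h1 h2 f) = sol fl hfl h1 h2 (tr θ f) := by
  rw [sol_apply, sol_apply, res_tr, res_tr]

lemma sol_bound (f : C(K, ℝ)) : ‖sol fl hfl h1 h2 f‖ ≤ ‖f‖ / |μ₁ * μ₂| := by
  have e1 := res_bound fl hfl h1 (res fl hfl h2 f)
  have e2 := res_bound fl hfl h2 f
  rw [sol_apply]
  refine e1.trans ?_
  rw [abs_mul, mul_comm, ← div_div]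
  gcongr

lemma sol_spec1 (f : C(K, ℝ)) : ∃ v', HasD fl (sol fl hfl h1 h2 f) v' ∧
    ‖v'‖ ≤ 2 * ‖f‖ / |μ₂| ∧
    HasD fl v' (f - (μ₁ + μ₂) • v' - (μ₁ * μ₂) • sol fl hfl h1 h2 f) := by
  have a1 := res_spec fl hfl h1 (res fl hfl h2 f)
  have a2 := res_spec fl hfl h2 f
  have b1 := sol_bound fl hfl h1 h2 f
  have b2 := res_bound fl hfl h2 f
  rw [← sol_apply fl hfl h1 h2] at a1
  refine ⟨_, a1, ?_, ?_⟩
  · have : ‖μ₁ • sol fl hfl h1 h2 f‖ ≤ ‖f‖ / |μ₂| := by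
      rw [norm_smul, Real.norm_eq_abs]
      have h1' : 0 < |μ₁| := abs_pos.mpr h1
      have h2' : 0 < |μ₂| := abs_pos.mpr h2
      calc _ ≤ |μ₁| * (‖f‖ / |μ₁ * μ₂|) := by gcongr
        _ = _ := by rw [abs_mul]; field_simp
    calc _ ≤ _ := norm_sub_le _ _
      _ ≤ ‖f‖ / |μ₂| + ‖f‖ / |μ₂| := by gcongr
      _ = _ := by ring
  · refine (a2.sub (a1.smul μ₁)).congr rfl ?_
    ext y; simp; ring

lemma mean_sol {f : C(K, ℝ)} (hf : mean vol f = 0) : mean vol (sol fl hfl h1 h2 f) = 0 := by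
  have a1 := mean_D vol (res_spec fl hfl h1 (res fl hfl h2 f))
  have a2 := mean_D vol (res_spec fl hfl h2 f)
  simp only [map_sub, map_smul, smul_eq_mul, hf] at a1 a2
  have : mean vol (res fl hfl h2 f) = 0 := by
    have : μ₂ * mean vol (res fl hfl h2 f) = 0 := by linarith
    simpa [h2] using this
  rw [this] at a1
  have : μ₁ * mean vol (res fl hfl h1 (res fl hfl h2 f)) = 0 := by linarith
  rw [sol_apply]
  simpa [h1] using this

lemma sol_D {G G' : C(K, ℝ)} (hG : HasD fl G G') :
    ‖sol fl hfl h1 h2 G'‖ ≤ 2 * ‖G‖ / |μ₂| := by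
  rw [sol_apply, res_comm]
  refine (res_bound fl hfl h2 _).trans ?_
  gcongr
  exact res_D fl hfl h1 hG

lemma sol_small {f G G' : C(K, ℝ)} (hG : HasD fl G G') {δ : ℝ} (hδ : ‖f - G'‖ ≤ δ) :
    ‖sol fl hfl h1 h2 f‖ ≤ 2 * ‖G‖ / |μ₂| + δ / |μ₁ * μ₂| := by
  have : f = G' + (f - G') := by abel
  rw [this, map_add]
  refine (norm_add_le _ _).trans ?_
  gcongr
  · exact sol_D fl hfl h1 h2 hG
  · refine (sol_bound fl hfl h1 h2 _).trans ?_
    gcongr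

/-- the operator `w ↦ T P (g w)` -/
noncomputable def kop (g : C(K, ℝ)) : C(K, ℝ) →L[ℝ] C(K, ℝ) :=
  (sol fl hfl h1 h2).comp ((proj vol).comp (ContinuousLinearMap.mul ℝ C(K, ℝ) g))

lemma kop_apply (g w : C(K, ℝ)) :
    kop vol fl hfl h1 h2 g w = sol fl hfl h1 h2 (proj vol (g * w)) := rfl

lemma sol_proj_bound (f : C(K, ℝ)) :
    ‖sol fl hfl h1 h2 (proj vol f)‖ ≤ 2 * ‖f‖ / |μ₁ * μ₂| := by
  refine (sol_bound _ _ _ _ _).trans ?_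
  gcongr
  exact proj_le vol f

lemma kop_sq {g G G' : C(K, ℝ)} (hG : HasD fl G G') {δ : ℝ} (hδ : ‖g - G'‖ ≤ δ) (w : C(K, ℝ)) :
    ‖kop vol fl hfl h1 h2 g (kop vol fl hfl h1 h2 g w)‖ ≤
      2 * ‖g‖ * (6 * ‖G‖ / (|μ₁ * μ₂| * |μ₂|) + 2 * δ / |μ₁ * μ₂| ^ 2) * ‖w‖ := by
  set f := proj vol (g * w) with hf
  have hδ0 : 0 ≤ δ := (norm_nonneg _).trans hδ
  have hfn : ‖f‖ ≤ 2 * (‖g‖ * ‖w‖) := (proj_le vol _).trans (by gcongr; exact norm_mul_le _ _)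
  have hk : kop vol fl hfl h1 h2 g w = sol fl hfl h1 h2 f := rfl
  set v := sol fl hfl h1 h2 f with hv
  have hvn : ‖v‖ ≤ ‖f‖ / |μ₁ * μ₂| := sol_bound fl hfl h1 h2 f
  obtain ⟨v', hv', hv'n, -⟩ := sol_spec1 fl hfl h1 h2 f
  rw [← hv] at hv'
  have hGv := hG.mul hv'
  have e : g * v = (G' * v + G * v') + ((g - G') * v - G * v') := by ring
  have hA : 0 < |μ₁ * μ₂| := abs_pos.mpr (mul_ne_zero h1 h2)
  have hB : 0 < |μ₂| := abs_pos.mpr h2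
  rw [hk, kop_apply, e, map_add, proj_of_mean vol (mean_D vol hGv), map_add]
  have n1 : ‖sol fl hfl h1 h2 (G' * v + G * v')‖ ≤ 2 * (‖G‖ * (‖f‖ / |μ₁ * μ₂|)) / |μ₂| := by
    refine (sol_D fl hfl h1 h2 hGv).trans ?_
    gcongr
    exact (norm_mul_le _ _).trans (by gcongr)
  have n2 : ‖sol fl hfl h1 h2 (proj vol ((g - G') * v - G * v'))‖ ≤
      2 * (δ * (‖f‖ / |μ₁ * μ₂|) + ‖G‖ * (2 * ‖f‖ / |μ₂|)) / |μ₁ * μ₂| := by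
    refine (sol_proj_bound vol fl hfl h1 h2 _).trans ?_
    gcongr
    refine (norm_sub_le _ _).trans (add_le_add ?_ ?_)
    · exact (norm_mul_le _ _).trans (by gcongr)
    · exact (norm_mul_le _ _).trans (by gcongr)
  refine (norm_add_le _ _).trans ((add_le_add n1 n2).trans ?_)
  have : 2 * (‖G‖ * (‖f‖ / |μ₁ * μ₂|)) / |μ₂| +
      2 * (δ * (‖f‖ / |μ₁ * μ₂|) + ‖G‖ * (2 * ‖f‖ / |μ₂|)) / |μ₁ * μ₂| =
      ‖f‖ * (6 * ‖G‖ / (|μ₁ * μ₂| * |μ₂|) + 2 * δ / |μ₁ * μ₂| ^ 2) := by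
    field_simp; ring
  rw [this]
  calc _ ≤ 2 * (‖g‖ * ‖w‖) * (6 * ‖G‖ / (|μ₁ * μ₂| * |μ₂|) + 2 * δ / |μ₁ * μ₂| ^ 2) := by gcongr
    _ = _ := by ring

end sol

lemma inverse_of_sq {X : Type*} [NormedAddCommGroup X] [NormedSpace ℝ X] [CompleteSpace X]
    (k : X →L[ℝ] X) (hk : ∀ w, ‖k (k w)‖ ≤ 1 / 2 * ‖w‖) {C : ℝ} (hC : ∀ w, ‖k w‖ ≤ C * ‖w‖)
    (hC0 : 0 ≤ C) :
    ∃ Bi : X →L[ℝ] X, (∀ w, Bi w + k (Bi w) = w) ∧ (∀ w, Bi (w + k w) = w) ∧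
      ∀ w, ‖Bi w‖ ≤ 2 * (1 + C) * ‖w‖ := by
  have hJ : ‖k * k‖ ≤ 1 / 2 := ContinuousLinearMap.opNorm_le_bound _ (by norm_num) hk
  set I := Units.oneSub (k * k) (by linarith) with hI
  have i1 : (1 - k * k) * (↑I⁻¹ : X →L[ℝ] X) = 1 := I.mul_inv
  have i2 : (↑I⁻¹ : X →L[ℝ] X) * (1 - k * k) = 1 := I.inv_mul
  have r1 : (1 + k) * ((1 - k) * (↑I⁻¹ : X →L[ℝ] X)) = 1 := by
    rw [← mul_assoc]; refine Eq.trans ?_ i1; congr 1; noncomm_ring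
  have r2 : ((↑I⁻¹ : X →L[ℝ] X) * (1 - k)) * (1 + k) = 1 := by
    rw [mul_assoc]; refine Eq.trans ?_ i2; congr 1; noncomm_ring
  have r3 := left_inv_eq_right_inv r2 r1
  have r4 : ((1 - k) * (↑I⁻¹ : X →L[ℝ] X)) * (1 + k) = 1 := by rw [← r3, r2]
  refine ⟨(1 - k) * (↑I⁻¹ : X →L[ℝ] X), fun w => ?_, fun w => ?_, fun w => ?_⟩
  · exact DFunLike.congr_fun r1 w
  · exact DFunLike.congr_fun r4 w
  · set z := (↑I⁻¹ : X →L[ℝ] X) w with hz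
    have e1 : z - k (k z) = w := DFunLike.congr_fun i1 w
    have e2 : ‖z‖ ≤ 2 * ‖w‖ := by
      have := hk z
      have h3 : ‖z‖ ≤ ‖w‖ + ‖k (k z)‖ := by
        calc ‖z‖ = ‖w + k (k z)‖ := by rw [← e1]; simp
          _ ≤ _ := norm_add_le _ _
      linarith
    change ‖z - k z‖ ≤ _
    calc _ ≤ ‖z‖ + ‖k z‖ := norm_sub_le _ _
      _ ≤ ‖z‖ + C * ‖z‖ := by gcongr; exact hC z
      _ = (1 + C) * ‖z‖ := by ring
      _ ≤ (1 + C) * (2 * ‖w‖) := by gcongr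
      _ = _ := by ring

lemma main_op (fl : ℝ →+ K) (hfl : Continuous fl)
    (happ : ∀ f : C(K, ℝ), mean vol f = 0 → ∀ δ > 0, ∃ G G', HasD fl G G' ∧ ‖f - G'‖ ≤ δ)
    {a : ℝ} (ha : a ≠ 0) (g f0 : C(K, ℝ)) (hg : mean vol g = 0) (η : ℝ) (hη : 0 < η) :
    ∃ M > 0, ∀ (μ₁ μ₂ : ℝ) (h1 : μ₁ ≠ 0) (h2 : μ₂ ≠ 0), μ₁ * μ₂ = a → M ≤ |μ₂| →
      ‖sol fl hfl h1 h2 (proj vol f0)‖ ≤ η ∧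
      ∃ Bi : C(K, ℝ) →L[ℝ] C(K, ℝ),
        (∀ w, Bi w + sol fl hfl h1 h2 (proj vol (g * Bi w)) = w) ∧
        (∀ w, Bi (w + sol fl hfl h1 h2 (proj vol (g * w))) = w) ∧
        ∀ w, ‖Bi w‖ ≤ 2 * (1 + 2 * ‖g‖ / |a|) * ‖w‖ := by
  have hA : 0 < |a| := abs_pos.mpr ha
  obtain ⟨G0, G0', hG0, hd0⟩ := happ (proj vol f0) (mean_proj vol f0) (η / 2 * |a|) (by positivity)
  obtain ⟨G, G', hG, hd⟩ := happ g hg (|a| ^ 2 / (16 * (‖g‖ + 1))) (by positivity)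
  refine ⟨1 + 4 * ‖G0‖ / η + 48 * ‖g‖ * ‖G‖ / |a|, by positivity, ?_⟩
  intro μ₁ μ₂ h1 h2 hμ hM
  have hB : 0 < |μ₂| := abs_pos.mpr h2
  have p1 : 0 ≤ 4 * ‖G0‖ / η := by positivity
  have p2 : 0 ≤ 48 * ‖g‖ * ‖G‖ / |a| := by positivity
  constructor
  · refine (sol_small fl hfl h1 h2 hG0 hd0).trans ?_
    rw [hμ, mul_div_cancel_right₀ _ hA.ne']
    have : 2 * ‖G0‖ / |μ₂| ≤ η / 2 := by
      rw [div_le_iff₀ hB]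
      have : 4 * ‖G0‖ / η ≤ |μ₂| := by linarith
      rw [div_le_iff₀ hη] at this
      linarith
    linarith
  · refine inverse_of_sq (kop vol fl hfl h1 h2 g) (fun w => ?_) (fun w => ?_) (by positivity)
    · refine (kop_sq vol fl hfl h1 h2 hG hd w).trans ?_
      gcongr
      rw [hμ]
      have q1 : 2 * ‖g‖ * (6 * ‖G‖ / (|a| * |μ₂|)) ≤ 1 / 4 := by
        have : 48 * ‖g‖ * ‖G‖ / |a| ≤ |μ₂| := by linarith
        rw [div_le_iff₀ hA] at this
        rw [← mul_div_assoc, div_le_iff₀ (by positivity)]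
        nlinarith
      have q2 : 2 * ‖g‖ * (2 * (|a| ^ 2 / (16 * (‖g‖ + 1))) / |a| ^ 2) ≤ 1 / 4 := by
        have : 2 * ‖g‖ * (2 * (|a| ^ 2 / (16 * (‖g‖ + 1))) / |a| ^ 2) = ‖g‖ / (4 * (‖g‖ + 1)) := by
          field_simp; ring
        rw [this, div_le_iff₀ (by positivity)]
        linarith
      rw [mul_add]; linarith
    · rw [kop_apply]
      refine (sol_proj_bound vol fl hfl h1 h2 _).trans ?_
      rw [hμ, div_mul_eq_mul_div, mul_assoc]
      gcongr
      exact norm_mul_le _ _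

end Mean

section Analytic

variable {K : Type*} [TopologicalSpace K] [CompactSpace K]

/-- Analyticity of a map into `C(K, ℝ)` is local on `K`. -/
lemma analyticAt_of_local [T2Space K] {V : Type*} [NormedAddCommGroup V] [NormedSpace ℝ V]
    {F : V → C(K, ℝ)} {x₀ : V}
    (hF : ∀ y : K, ∃ U ∈ 𝓝 y, ∃ g : V → C(K, ℝ), AnalyticAt ℝ g x₀ ∧
      ∀ᶠ x in 𝓝 x₀, ∀ y' ∈ U, F x y' = g x y') : AnalyticAt ℝ F x₀ := by
  choose U hU g hg hFg using hF
  obtain ⟨t, ht⟩ := isCompact_univ.elim_nhds_subcover (fun y => interior (U y))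
    (fun y _ => interior_mem_nhds.mpr (hU y))
  obtain ⟨ρ, hρ⟩ := PartitionOfUnity.exists_isSubordinate (ι := t) (X := K) isClosed_univ
    (fun i => interior (U i.1)) (fun i => isOpen_interior) (fun y hy => by
      have := ht.2 hy
      simpa using this)
  have h1 : AnalyticAt ℝ (fun x => ∑ i : t, (ContinuousLinearMap.mul ℝ C(K, ℝ) (ρ i)) (g i.1 x)) x₀ := by
    apply Finset.analyticAt_fun_sum
    intro i _
    exact (ContinuousLinearMap.analyticAt _ _).comp (hg i.1)
  refine h1.congr ?_
  have h2 : ∀ᶠ x in 𝓝 x₀, ∀ i : t, ∀ y' ∈ U i.1, F x y' = g i.1 x y' :=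
    Filter.eventually_all.mpr fun i => hFg i.1
  filter_upwards [h2] with x hx
  ext y
  simp only [ContinuousLinearMap.mul_apply', ContinuousMap.sum_apply, ContinuousMap.mul_apply]
  have h3 : ∀ i : t, ρ i y * g i.1 x y = ρ i y * F x y := by
    intro i
    by_cases hy : y ∈ tsupport (ρ i)
    · rw [hx i y (interior_subset (hρ i hy))]
    · rw [image_eq_zero_of_notMem_tsupport hy]; simp
  simp_rw [h3]
  rw [← Finset.sum_mul, ← finsum_eq_sum_of_fintype, ρ.sum_eq_one (Set.mem_univ y), one_mul]

/-- pointwise lift of a formal power series to spaces of continuous functions -/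
noncomputable def liftSeries {E : Type*} [NormedAddCommGroup E] [NormedSpace ℝ E] (K : Type*)
    [TopologicalSpace K] [CompactSpace K]
    (p : FormalMultilinearSeries ℝ E ℝ) : FormalMultilinearSeries ℝ C(K, E) C(K, ℝ) := fun n =>
  MultilinearMap.mkContinuous
    { toFun := fun w => ⟨fun y => p n (fun i => w i y), by fun_prop⟩
      map_update_add' := fun w i a b => by
        ext y
        have := (p n).map_update_add (fun i => w i y) i (a y) (b y)
        simp only [ContinuousMap.coe_mk, ContinuousMap.add_apply]
        convert this using 2 <;>
        · try congr 1
          funext j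
          by_cases hj : j = i
          · subst hj; simp
          · simp [hj]
      map_update_smul' := fun w i c a => by
        ext y
        have := (p n).map_update_smul (fun i => w i y) i c (a y)
        simp only [ContinuousMap.coe_mk, ContinuousMap.smul_apply]
        convert this using 2 <;>
        · try congr 1
          funext j
          by_cases hj : j = i
          · subst hj; simp
          · simp [hj] } ‖p n‖ (fun w => by
      rw [ContinuousMap.norm_le _ (by positivity)]
      intro y
      refine ((p n).le_opNorm _).trans ?_
      gcongr with i
      exact (w i).norm_coe_le_norm y)

lemma liftSeries_apply {E : Type*} [NormedAddCommGroup E] [NormedSpace ℝ E]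
    (p : FormalMultilinearSeries ℝ E ℝ) (n : ℕ) (w : Fin n → C(K, E)) (y : K) :
    liftSeries K p n w y = p n (fun i => w i y) := rfl

lemma liftSeries_norm {E : Type*} [NormedAddCommGroup E] [NormedSpace ℝ E]
    (p : FormalMultilinearSeries ℝ E ℝ) (n : ℕ) : ‖liftSeries K p n‖ ≤ ‖p n‖ :=
  MultilinearMap.mkContinuous_norm_le _ (norm_nonneg _) _

lemma liftSeries_radius {E : Type*} [NormedAddCommGroup E] [NormedSpace ℝ E]
    (p : FormalMultilinearSeries ℝ E ℝ) : p.radius ≤ (liftSeries K p).radius := by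
  apply ENNReal.le_of_forall_nnreal_lt
  intro r hr
  obtain ⟨C, hC, h⟩ := p.norm_mul_pow_le_of_lt_radius hr
  refine (liftSeries K p).le_radius_of_bound C fun n => ?_
  exact (mul_le_mul_of_nonneg_right (liftSeries_norm p n) (by positivity)).trans (h n)

lemma liftSeries_sum {E : Type*} [NormedAddCommGroup E] [NormedSpace ℝ E]
    {p : FormalMultilinearSeries ℝ E ℝ} {f : E → ℝ} {x₀ : E} {r : ENNReal}
    (hf : HasFPowerSeriesOnBall f p x₀ r) {w : C(K, E)} (hw : ENNReal.ofReal ‖w‖ < r) (y : K) :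
    (liftSeries K p).sum w y = f (x₀ + w y) := by
  have hw1 : w ∈ Metric.eball (0 : C(K, E)) (liftSeries K p).radius := by
    rw [Metric.mem_eball, edist_zero_right, ← ofReal_norm]
    exact hw.trans_le (hf.r_le.trans (liftSeries_radius p))
  have h1 := (liftSeries K p).hasSum hw1
  have h2 := h1.mapL (ContinuousMap.evalCLM ℝ y)
  have hw2 : w y ∈ Metric.eball (0 : E) r := by
    rw [Metric.mem_eball, edist_zero_right, ← ofReal_norm]
    exact (ENNReal.ofReal_le_ofReal (w.norm_coe_le_norm y)).trans_lt hw
  exact h2.unique (hf.hasSum hw2)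

lemma liftSeries_analytic {E : Type*} [NormedAddCommGroup E] [NormedSpace ℝ E]
    {p : FormalMultilinearSeries ℝ E ℝ} {f : E → ℝ} {x₀ : E} {r : ENNReal}
    (hf : HasFPowerSeriesOnBall f p x₀ r) {w : C(K, E)} (hw : ENNReal.ofReal ‖w‖ < r) :
    AnalyticAt ℝ (liftSeries K p).sum w := by
  have h0 : 0 < (liftSeries K p).radius :=
    hf.r_pos.trans_le (hf.r_le.trans (liftSeries_radius p))
  have h1 := (liftSeries K p).hasFPowerSeriesOnBall h0
  refine h1.analyticAt_of_mem ?_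
  rw [Metric.mem_eball, edist_zero_right, ← ofReal_norm]
  exact hw.trans_le (hf.r_le.trans (liftSeries_radius p))

/-- analytic dependence of fixed points on a parameter -/
lemma fixedPoint_analytic {X E : Type*} [NormedAddCommGroup X] [NormedSpace ℝ X] [CompleteSpace X]
    [NormedAddCommGroup E] [NormedSpace ℝ E] [CompleteSpace E]
    {S : X × E → X} {u : E → X} (hS : AnalyticAt ℝ S (u 0, 0))
    {s : Set X} (hs : s ∈ 𝓝 (u 0)) (hlip : ∀ v ∈ s, ∀ w ∈ s, ‖S (v, 0) - S (w, 0)‖ ≤ 1 / 2 * ‖v - w‖)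
    (hu : ContinuousAt u 0) (hfix : ∀ θ, S (u θ, θ) = u θ) : AnalyticAt ℝ u 0 := by
  set DS := fderiv ℝ S (u 0, 0) with hDS
  set A : X →L[ℝ] X := DS.comp (ContinuousLinearMap.inl ℝ X E) with hA
  have hS1 : HasFDerivAt (fun v => S (v, (0 : E))) A (u 0) := by
    have h1 : HasFDerivAt (fun v : X => (v, (0 : E))) (ContinuousLinearMap.inl ℝ X E) (u 0) :=
      hasFDerivAt_prodMk_left _ _
    exact HasFDerivAt.comp (u 0) hS.differentiableAt.hasFDerivAt h1
  have hA1 : ‖A‖ ≤ 1 / 2 := by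
    rw [← hS1.fderiv]
    refine norm_fderiv_le_of_lipschitzOn ℝ hs (C := 1 / 2) ?_
    rw [lipschitzOnWith_iff_norm_sub_le]
    intro v hv w hw
    simpa using hlip v hv w hw
  set I := Units.oneSub A (by linarith) with hI
  have i1 : ∀ x, (↑I⁻¹ : X →L[ℝ] X) x - A ((↑I⁻¹ : X →L[ℝ] X) x) = x :=
    fun x => DFunLike.congr_fun I.mul_inv x
  have i2 : ∀ x, (↑I⁻¹ : X →L[ℝ] X) (x - A x) = x := fun x => DFunLike.congr_fun I.inv_mul x
  set Φ : X × E → X × E := fun z => (z.1 - S z, z.2) with hΦ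
  have hΦa : AnalyticAt ℝ Φ (u 0, 0) := by
    exact (analyticAt_fst.sub hS).prod analyticAt_snd
  set L : X × E →L[ℝ] X × E :=
    (ContinuousLinearMap.fst ℝ X E - DS).prod (ContinuousLinearMap.snd ℝ X E) with hL
  set M : X × E →L[ℝ] X × E :=
    ((↑I⁻¹ : X →L[ℝ] X).comp (ContinuousLinearMap.fst ℝ X E +
      (DS.comp (ContinuousLinearMap.inr ℝ X E)).comp (ContinuousLinearMap.snd ℝ X E))).prod
      (ContinuousLinearMap.snd ℝ X E) with hM
  have hsplit : ∀ x e, DS (x, e) = A x + DS (0, e) := by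
    intro x e
    rw [hA]
    simp only [ContinuousLinearMap.comp_apply, ContinuousLinearMap.inl_apply]
    rw [← map_add]; simp
  let i : (X × E) ≃L[ℝ] (X × E) := ContinuousLinearEquiv.equivOfInverse L M
    (by
      rintro ⟨x, e⟩
      have : M (L (x, e)) = ((↑I⁻¹ : X →L[ℝ] X) ((x - DS (x, e)) + DS (0, e)), e) := rfl
      rw [this, hsplit]
      have e2 : x - (A x + DS (0, e)) + DS (0, e) = x - A x := by abel
      rw [e2, i2])
    (by
      rintro ⟨x, e⟩
      have : L (M (x, e)) = ((↑I⁻¹ : X →L[ℝ] X) (x + DS (0, e))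
        - DS ((↑I⁻¹ : X →L[ℝ] X) (x + DS (0, e)), e), e) := rfl
      rw [this, hsplit ((↑I⁻¹ : X →L[ℝ] X) (x + DS (0, e))) e, ← sub_sub, i1]; simp)
  have hder : HasFDerivAt Φ (i : X × E →L[ℝ] X × E) (u 0, 0) := by
    have h1 : HasFDerivAt (fun z : X × E => z.1 - S z) (ContinuousLinearMap.fst ℝ X E - DS) (u 0, 0) :=
      hasFDerivAt_fst.sub hS.differentiableAt.hasFDerivAt
    exact h1.prodMk hasFDerivAt_snd
  have hstrict : HasStrictFDerivAt Φ (i : X × E →L[ℝ] X × E) (u 0, 0) := by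
    have := hΦa.hasStrictFDerivAt
    rwa [hder.fderiv] at this
  set e := hstrict.toOpenPartialHomeomorph Φ with he
  have hsrc : (u 0, (0 : E)) ∈ e.source := hstrict.mem_toOpenPartialHomeomorph_source
  have hec : (e : X × E → X × E) = Φ := hstrict.toOpenPartialHomeomorph_coe
  have hsym : AnalyticAt ℝ e.symm (e (u 0, 0)) :=
    e.analyticAt_symm' (i := i) hsrc (by rw [hec]; exact hΦa) (by rw [hec]; exact hder.fderiv)
  have hval : ∀ θ, Φ (u θ, θ) = (0, θ) := fun θ => by simp [hΦ, hfix θ]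
  rw [hec, hval 0] at hsym
  have hcomp : AnalyticAt ℝ (fun θ : E => (e.symm ((0 : X), θ)).1) 0 := by
    have h1 : AnalyticAt ℝ (fun θ : E => ((0 : X), θ)) 0 := analyticAt_const.prod analyticAt_id
    have h2 : AnalyticAt ℝ (fun θ : E => e.symm ((0 : X), θ)) 0 :=
      AnalyticAt.comp (g := e.symm) (f := fun θ : E => ((0 : X), θ)) hsym h1
    exact analyticAt_fst.comp h2
  refine hcomp.congr ?_
  have hcu : ContinuousAt (fun θ => (u θ, θ)) (0 : E) := hu.prodMk continuousAt_id
  have := hcu.preimage_mem_nhds (e.open_source.mem_nhds hsrc)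
  filter_upwards [this] with θ hθ
  have h3 := e.left_inv hθ
  rw [hec, hval] at h3
  rw [h3]

end Analytic

section Torus

variable {d : ℕ}

/-- the covering map of the torus -/
noncomputable def q (d : ℕ) : (Fin d → ℝ) →+ UnitAddTorus (Fin d) where
  toFun ψ := fun i => ((ψ i / (2 * Real.pi) : ℝ) : UnitAddCircle)
  map_zero' := by funext i; simp
  map_add' a b := by funext i; simp [add_div]

lemma q_apply (ψ : Fin d → ℝ) (i : Fin d) :
    q d ψ i = ((ψ i / (2 * Real.pi) : ℝ) : UnitAddCircle) := rfl

lemma two_pi_pos : 0 < 2 * Real.pi := by positivity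

lemma q_open : IsOpenQuotientMap (q d) := by
  have h1 : IsOpenQuotientMap (fun x : ℝ => ((x / (2 * Real.pi) : ℝ) : UnitAddCircle)) := by
    have h2 : IsOpenQuotientMap (fun x : ℝ => (x : UnitAddCircle)) :=
      QuotientAddGroup.isOpenQuotientMap_mk
    have h3 : IsOpenQuotientMap (fun x : ℝ => x / (2 * Real.pi)) :=
      (Homeomorph.mulRight₀ (2 * Real.pi)⁻¹ (inv_ne_zero two_pi_pos.ne')).isOpenQuotientMap
    exact h2.comp h3
  exact IsOpenQuotientMap.piMap (fun _ : Fin d => h1)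

lemma q_cont : Continuous (q d) := q_open.continuous

/-- the linear flow -/
noncomputable def flow (ω : Fin d → ℝ) : ℝ →+ UnitAddTorus (Fin d) :=
  (q d).comp ⟨⟨fun t => t • ω, by simp⟩, fun s t => add_smul s t ω⟩

lemma flow_apply (ω : Fin d → ℝ) (t : ℝ) : flow ω t = q d (t • ω) := rfl

lemma flow_cont (ω : Fin d → ℝ) : Continuous (flow ω) :=
  q_cont.comp (by fun_prop : Continuous fun t : ℝ => t • ω)

lemma q_single (i : Fin d) : q d (Pi.single i (2 * Real.pi)) = 0 := by
  funext j
  rw [q_apply]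
  by_cases h : j = i
  · subst h
    simp
  · simp [h]

lemma periodic_of_q_eq {F : (Fin d → ℝ) → ℝ}
    (hF : ∀ ψ i, F (ψ + Pi.single i (2 * Real.pi)) = F ψ) {ψ ψ' : Fin d → ℝ}
    (h : q d ψ = q d ψ') : F ψ = F ψ' := by
  have hn : ∀ i, ∃ n : ℤ, ψ i - ψ' i = n * (2 * Real.pi) := by
    intro i
    have h1 := congrFun h i
    rw [q_apply, q_apply, ← sub_eq_zero, ← AddCircle.coe_sub, AddCircle.coe_eq_zero_iff] at h1
    obtain ⟨n, hn⟩ := h1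
    refine ⟨n, ?_⟩
    have hp := two_pi_pos.ne'
    rw [zsmul_eq_mul, mul_one, ← sub_div, eq_div_iff hp] at hn
    exact hn.symm
  choose n hn using hn
  have hper : ∀ i, Function.Periodic (fun ψ => F ψ) (Pi.single i (2 * Real.pi)) := fun i ψ => hF ψ i
  have h2 : ∀ s : Finset (Fin d), ∀ ψ, F (ψ + ∑ i ∈ s, n i • (Pi.single i (2 * Real.pi) : Fin d → ℝ)) = F ψ := by
    intro s
    induction s using Finset.induction_on with
    | empty => simp
    | insert a s ha ih =>
      intro ψ
      rw [Finset.sum_insert ha, ← add_assoc, ih]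
      exact (hper a).zsmul (n a) ψ
  have h3 : ψ = ψ' + ∑ i, n i • (Pi.single i (2 * Real.pi) : Fin d → ℝ) := by
    funext j
    have : (∑ i, n i • (Pi.single i (2 * Real.pi) : Fin d → ℝ)) j = n j * (2 * Real.pi) := by
      rw [Finset.sum_apply, Finset.sum_eq_single j]
      · simp
      · intro b _ hb; simp [Ne.symm hb]
      · simp
    rw [Pi.add_apply, this, ← hn j]; ring
  rw [h3, h2]

lemma exists_lift {F : ℝ → (Fin d → ℝ) → ℝ} (hc : Continuous fun z : ℝ × (Fin d → ℝ) => F z.1 z.2)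
    (hF : ∀ x ψ i, F x (ψ + Pi.single i (2 * Real.pi)) = F x ψ) :
    ∃ H : ℝ → UnitAddTorus (Fin d) → ℝ,
      (Continuous fun z : ℝ × UnitAddTorus (Fin d) => H z.1 z.2) ∧
      ∀ x ψ, H x (q d ψ) = F x ψ := by
  have hs := q_open.surjective (f := q d)
  have key : ∀ x ψ, F x (Function.surjInv hs (q d ψ)) = F x ψ := fun x ψ =>
    periodic_of_q_eq (hF x) (Function.surjInv_eq hs _)
  refine ⟨fun x y => F x (Function.surjInv hs y), ?_, key⟩
  rw [← (IsOpenQuotientMap.id.prodMap q_open).continuous_comp_iff]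
  convert hc using 1
  funext z
  exact key z.1 z.2

/-- normalised Haar measure on the torus -/
noncomputable def tvol (d : ℕ) : Measure (UnitAddTorus (Fin d)) :=
  Measure.pi fun _ => (AddCircle.haarAddCircle : Measure UnitAddCircle)

instance : IsProbabilityMeasure (tvol d) := by unfold tvol; infer_instance

instance : (tvol d).IsAddLeftInvariant := by unfold tvol; infer_instance

open Pointwise in
lemma integral_torus (f : UnitAddTorus (Fin d) → ℝ) :
    ((2 * Real.pi) ^ d)⁻¹ * ∫ ψ in Set.Icc (0 : Fin d → ℝ) (fun _ => 2 * Real.pi), f (q d ψ)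
      = ∫ y, f y ∂(tvol d) := by
  have h1 : ∫ y, f y ∂(tvol d) =
      ∫ (x : Fin d → ℝ) in {x : Fin d → ℝ | ∀ i, x i ∈ Set.Ioc ((0 : Fin d → ℝ) i) ((0 : Fin d → ℝ) i + 1)},
        f (fun i => (x i : UnitAddCircle)) :=
    UnitAddTorus.integral_preimage f 0
  rw [h1]
  have h2 := Measure.setIntegral_comp_smul (volume : Measure (Fin d → ℝ))
    (fun x => f (fun i => (x i : UnitAddCircle))) (R := (2 * Real.pi)⁻¹)
    (Set.Icc (0 : Fin d → ℝ) (fun _ => 2 * Real.pi)) (inv_ne_zero two_pi_pos.ne')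
  have h3 : (2 * Real.pi)⁻¹ • (Set.Icc (0 : Fin d → ℝ) (fun _ => 2 * Real.pi))
      = Set.Icc (0 : Fin d → ℝ) (fun _ => 1) := by
    ext x
    rw [Set.mem_inv_smul_set_iff₀ two_pi_pos.ne']
    simp only [Set.mem_Icc, Pi.le_def, Pi.smul_apply, smul_eq_mul, Pi.zero_apply]
    refine and_congr (forall_congr' fun i => ?_) (forall_congr' fun i => ?_)
    · exact mul_nonneg_iff_of_pos_left two_pi_pos
    · exact mul_le_iff_le_one_right two_pi_pos
  rw [h3] at h2
  have h4 : (fun ψ : Fin d → ℝ => f (q d ψ)) =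
      fun ψ => f (fun i => (((2 * Real.pi)⁻¹ • ψ) i : UnitAddCircle)) := by
    funext ψ; congr 1; funext i; rw [q_apply]; congr 1
    simp [div_eq_inv_mul]
  rw [h4, h2]
  have h5 : ∫ (x : Fin d → ℝ) in {x : Fin d → ℝ | ∀ i, x i ∈ Set.Ioc ((0 : Fin d → ℝ) i) ((0 : Fin d → ℝ) i + 1)},
        f (fun i => (x i : UnitAddCircle)) = ∫ (x : Fin d → ℝ) in Set.Icc (0 : Fin d → ℝ) (fun _ => 1),
        f (fun i => (x i : UnitAddCircle)) := by
    apply setIntegral_congr_set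
    have := Measure.univ_pi_Ioc_ae_eq_Icc (μ := fun _ : Fin d => (volume : Measure ℝ))
      (f := 0) (g := fun _ => 1)
    have e : {x : Fin d → ℝ | ∀ i, x i ∈ Set.Ioc ((0 : Fin d → ℝ) i) ((0 : Fin d → ℝ) i + 1)}
        = Set.univ.pi fun i => Set.Ioc ((0 : Fin d → ℝ) i) 1 := by
      ext x; simp
    rw [e]
    exact this
  rw [h5]
  have hp : (0:ℝ) < (2 * Real.pi) ^ d := by positivity
  simp only [Module.finrank_fintype_fun_eq_card, Fintype.card_fin, smul_eq_mul]
  rw [inv_pow, inv_inv, abs_of_pos hp, ← mul_assoc, inv_mul_cancel₀ hp.ne', one_mul]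

lemma hasD_mFourier (ω : Fin d → ℝ) (ν : Fin d → ℤ) :
    HasD (flow ω) (UnitAddTorus.mFourier ν)
      ((Complex.I * ((∑ i, ω i * (ν i : ℝ) : ℝ) : ℂ)) • UnitAddTorus.mFourier ν) := by
  intro y t
  set k : ℝ := ∑ i, ω i * (ν i : ℝ) with hk
  have h1 : ∀ s, UnitAddTorus.mFourier ν (y + flow ω s) =
      UnitAddTorus.mFourier ν y * Complex.exp (Complex.I * k * (s : ℂ)) := by
    intro s
    simp only [UnitAddTorus.mFourier, ContinuousMap.coe_mk]
    have : ∀ i, fourier (ν i) ((y + flow ω s) i) =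
        fourier (ν i) (y i) * Complex.exp (Complex.I * (ω i * ν i) * s) := by
      intro i
      have e1 : fourier (ν i) ((y + flow ω s) i) = fourier (ν i) (y i) * fourier (ν i) (flow ω s i) := by
        simp [fourier_apply, AddCircle.toCircle_add]
      rw [e1, flow_apply, q_apply, fourier_coe_apply]
      congr 2
      have : (Real.pi : ℂ) ≠ 0 := by exact_mod_cast Real.pi_ne_zero
      simp; field_simp
    simp_rw [this]
    rw [Finset.prod_mul_distrib, ← Complex.exp_sum]
    congr 2
    rw [hk]; push_cast
    rw [Finset.mul_sum, Finset.sum_mul]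
  simp only [ContinuousMap.smul_apply, smul_eq_mul]
  simp_rw [h1]
  have h2 : HasDerivAt (fun s : ℝ => Complex.I * k * (s : ℂ)) (Complex.I * k) t := by
    simpa using (Complex.ofRealCLM.hasDerivAt (x := t)).const_mul (Complex.I * k)
  refine HasDerivAt.congr_deriv (h2.cexp.const_mul (UnitAddTorus.mFourier ν y)) ?_
  ring

lemma approx (ω : Fin d → ℝ) (hω : ∀ ν : Fin d → ℤ, ν ≠ 0 → (∑ i, ω i * (ν i : ℝ)) ≠ 0)
    (f : C(UnitAddTorus (Fin d), ℝ)) (hf : mean (tvol d) f = 0) (δ : ℝ) (hδ : 0 < δ) :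
    ∃ G G', HasD (flow ω) G G' ∧ ‖f - G'‖ ≤ δ := by
  set cf : C(UnitAddTorus (Fin d), ℂ) := ⟨fun y => (f y : ℂ), by fun_prop⟩ with hcf
  have hmem : cf ∈ (Submodule.span ℂ (Set.range <| UnitAddTorus.mFourier (d := Fin d))).topologicalClosure := by
    rw [UnitAddTorus.span_mFourier_closure_eq_top]; trivial
  rw [← SetLike.mem_coe, Submodule.topologicalClosure_coe, Metric.mem_closure_iff] at hmem
  obtain ⟨p, hp, hpd⟩ := hmem (δ / 2) (by positivity)
  rw [dist_eq_norm] at hpd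
  have hsp : ∃ (c : ℂ) (G : C(UnitAddTorus (Fin d), ℂ)), HasD (flow ω) G (p - c • 1) := by
    clear hpd
    rw [SetLike.mem_coe] at hp
    induction hp using Submodule.span_induction with
    | mem x hx =>
      obtain ⟨ν, rfl⟩ := hx
      by_cases hν : ν = 0
      · refine ⟨1, 0, fun y t => ?_⟩
        subst hν
        rw [UnitAddTorus.mFourier_zero]
        simpa using hasDerivAt_const t (0:ℂ)
      · refine ⟨0, (Complex.I * ((∑ i, ω i * (ν i : ℝ) : ℝ) : ℂ))⁻¹ • UnitAddTorus.mFourier ν, ?_⟩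
        refine ((hasD_mFourier ω ν).csmul _).congr rfl ?_
        rw [smul_smul, inv_mul_cancel₀, one_smul, zero_smul, sub_zero]
        exact mul_ne_zero Complex.I_ne_zero (by exact_mod_cast hω ν hν)
    | zero =>
      refine ⟨0, 0, fun y t => ?_⟩
      simpa using hasDerivAt_const t (0:ℂ)
    | add x y _ _ hx hy =>
      obtain ⟨c, G, h⟩ := hx
      obtain ⟨c', G', h'⟩ := hy
      exact ⟨c + c', G + G', (h.add h').congr rfl (by rw [add_smul]; abel)⟩
    | smul a x _ hx =>
      obtain ⟨c, G, h⟩ := hx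
      exact ⟨a * c, a • G, (h.csmul a).congr rfl (by rw [smul_sub, smul_smul])⟩
  obtain ⟨c, G, hG⟩ := hsp
  set Gr : C(UnitAddTorus (Fin d), ℝ) := ⟨fun y => (G y).re, by fun_prop⟩ with hGr
  set pr : C(UnitAddTorus (Fin d), ℝ) := ⟨fun y => (p y).re, by fun_prop⟩ with hpr
  have hD : HasD (flow ω) Gr (pr - c.re • 1) := by
    intro y t
    have h1 := (Complex.reCLM.hasFDerivAt).comp_hasDerivAt t (hG y t)
    simpa [Function.comp_def, hGr, hpr] using h1
  have hn : ‖f - pr‖ ≤ δ / 2 := by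
    rw [ContinuousMap.norm_le _ (by positivity)]
    intro y
    have h1 : (f - pr) y = ((cf - p) y).re := by simp [hcf, hpr]
    rw [h1]
    exact (Complex.abs_re_le_norm _).trans (((cf - p).norm_coe_le_norm y).trans hpd.le)
  have hc : |c.re| ≤ δ / 2 := by
    have h1 := mean_D (tvol d) hD
    have h2 : mean (tvol d) (f - pr) = - c.re := by
      simp only [map_sub, map_smul, mean_one, smul_eq_mul, mul_one] at h1 ⊢
      linarith
    have h3 := mean_le (tvol d) (f - pr)
    rw [h2, abs_neg] at h3
    exact h3.trans hn
  refine ⟨Gr, _, hD, ?_⟩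
  have : f - (pr - c.re • 1) = (f - pr) + c.re • (1 : C(UnitAddTorus (Fin d), ℝ)) := by abel
  rw [this]
  refine (norm_add_le _ _).trans ?_
  rw [norm_smul, Real.norm_eq_abs]
  have : ‖(1 : C(UnitAddTorus (Fin d), ℝ))‖ = 1 := norm_one
  rw [this]; linarith

end Torus

section Nem

variable {d : ℕ}

/-- local sections of the covering map -/
lemma exists_section (ψ₀ : Fin d → ℝ) {δ : ℝ} (hδ : 0 < δ) :
    ∃ σ : C(UnitAddTorus (Fin d), Fin d → ℝ), (∀ y, ‖σ y‖ ≤ δ) ∧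
      ∀ᶠ y in 𝓝 (q d ψ₀), q d (ψ₀ + σ y) = y := by
  refine ⟨⟨fun y i => max (-δ) (min δ (Real.arcsin (fourier 1 (y i - q d ψ₀ i) : ℂ).im)), ?_⟩, ?_, ?_⟩
  · refine continuous_pi fun i => ?_
    have h1 : Continuous fun y : UnitAddTorus (Fin d) => y i - q d ψ₀ i :=
      (continuous_apply i).sub continuous_const
    have h2 := Complex.continuous_im.comp ((fourier (T := (1:ℝ)) 1).continuous.comp h1)
    exact continuous_const.max (continuous_const.min (Real.continuous_arcsin.comp h2))
  · intro y
    rw [pi_norm_le_iff_of_nonneg hδ.le]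
    intro i
    rw [Real.norm_eq_abs, abs_le]
    exact ⟨le_max_left _ _, max_le (by linarith) (min_le_left _ _)⟩
  · have hr : 0 < min δ (Real.pi / 2) := by positivity
    have h1 : q d '' (Metric.ball ψ₀ (min δ (Real.pi / 2))) ∈ 𝓝 (q d ψ₀) :=
      q_open.isOpenMap.image_mem_nhds (Metric.ball_mem_nhds _ hr)
    filter_upwards [h1] with y hy
    obtain ⟨ψ, hψ, rfl⟩ := hy
    congr 1
    funext i
    have h2 : |ψ i - ψ₀ i| < min δ (Real.pi / 2) := by
      rw [← Real.dist_eq]; exact (dist_le_pi_dist ψ ψ₀ i).trans_lt hψ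
    rw [lt_min_iff, abs_lt, abs_lt] at h2
    have h3 : q d ψ i - q d ψ₀ i = (((ψ i - ψ₀ i) / (2 * Real.pi) : ℝ) : UnitAddCircle) := by
      rw [q_apply, q_apply, ← AddCircle.coe_sub, sub_div]
    have h4 : (fourier 1 (q d ψ i - q d ψ₀ i) : ℂ) = Complex.exp (((ψ i - ψ₀ i : ℝ) : ℂ) * Complex.I) := by
      rw [h3, fourier_coe_apply]
      congr 1
      have : (Real.pi : ℂ) ≠ 0 := by exact_mod_cast Real.pi_ne_zero
      push_cast; field_simp
    simp only [ContinuousMap.coe_mk, Pi.add_apply]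
    rw [h4, Complex.exp_ofReal_mul_I_im, Real.arcsin_sin (by linarith) (by linarith),
      min_eq_right (by linarith), max_eq_right (by linarith)]
    ring

/-- the Nemytskii operator with shifted torus variable -/
noncomputable def nem (H : ℝ → UnitAddTorus (Fin d) → ℝ)
    (hH : Continuous fun z : ℝ × UnitAddTorus (Fin d) => H z.1 z.2)
    (z : C(UnitAddTorus (Fin d), ℝ) × (Fin d → ℝ)) : C(UnitAddTorus (Fin d), ℝ) :=
  ⟨fun y => H (z.1 y) (y + q d z.2),
    hH.comp (z.1.continuous.prodMk (continuous_id.add continuous_const))⟩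

/-- the linear part of the local representation -/
noncomputable def pairL (K : Type*) [TopologicalSpace K] [CompactSpace K] (d : ℕ) :
    (C(K, ℝ) × (Fin d → ℝ)) →L[ℝ] C(K, ℝ × (Fin d → ℝ)) :=
  LinearMap.mkContinuous
    { toFun := fun z => ⟨fun y => (z.1 y, z.2), by fun_prop⟩
      map_add' := fun z w => by ext <;> simp
      map_smul' := fun c z => by ext <;> simp } 1 (fun z => by
        rw [one_mul, ContinuousMap.norm_le _ (norm_nonneg _)]
        intro y
        rw [Prod.norm_def, Prod.norm_def]
        exact max_le_max (z.1.norm_coe_le_norm y) le_rfl)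

lemma pairL_apply (K : Type*) [TopologicalSpace K] [CompactSpace K] (d : ℕ)
    (z : C(K, ℝ) × (Fin d → ℝ)) (y : K) : pairL K d z y = (z.1 y, z.2) := rfl

lemma nem_analytic {h : ℝ → (Fin d → ℝ) → ℝ}
    (hh : ∀ p : ℝ × (Fin d → ℝ), AnalyticAt ℝ (fun q : ℝ × (Fin d → ℝ) => h q.1 q.2) p)
    {H : ℝ → UnitAddTorus (Fin d) → ℝ}
    (hH : Continuous fun z : ℝ × UnitAddTorus (Fin d) => H z.1 z.2)
    (hHq : ∀ x ψ, H x (q d ψ) = h x ψ) (v0 : C(UnitAddTorus (Fin d), ℝ)) :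
    AnalyticAt ℝ (nem H hH) (v0, 0) := by
  apply analyticAt_of_local
  intro y0
  obtain ⟨ψ₀, rfl⟩ := q_open.surjective (f := q d) y0
  obtain ⟨p, r, hp⟩ := hh (v0 (q d ψ₀), ψ₀)
  obtain ⟨δ, hδ, hδr⟩ : ∃ δ : ℝ, 0 < δ ∧ ENNReal.ofReal (2 * δ) < r := by
    obtain ⟨s, hs, hsr⟩ := ENNReal.lt_iff_exists_nnreal_btwn.mp hp.r_pos
    refine ⟨s / 2, by have : 0 < s := by exact_mod_cast hs
                      positivity, ?_⟩
    have : (2 * ((s:ℝ) / 2)) = s := by ring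
    rwa [this, ENNReal.ofReal_coe_nnreal]
  obtain ⟨σ, hσ, hσq⟩ := exists_section ψ₀ hδ
  set x0 := v0 (q d ψ₀) with hx0
  set w0 : C(UnitAddTorus (Fin d), ℝ × (Fin d → ℝ)) :=
    ⟨fun y => (max (-δ) (min δ (v0 y - x0)), σ y), by fun_prop⟩ with hw0
  have hw0n : ‖w0‖ ≤ δ := by
    rw [ContinuousMap.norm_le _ hδ.le]
    intro y
    rw [Prod.norm_def]
    refine max_le ?_ (hσ y)
    rw [Real.norm_eq_abs, abs_le]
    exact ⟨le_max_left _ _, max_le (by linarith) (min_le_left _ _)⟩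
  set L := pairL (UnitAddTorus (Fin d)) d with hL
  set A : C(UnitAddTorus (Fin d), ℝ) × (Fin d → ℝ) → C(UnitAddTorus (Fin d), ℝ × (Fin d → ℝ)) :=
    fun z => w0 + L (z - (v0, 0)) with hA
  have hA0 : A (v0, 0) = w0 := by simp [hA]
  have hAan : AnalyticAt ℝ A (v0, 0) := by
    refine analyticAt_const.add ?_
    exact (L.analyticAt _).comp (analyticAt_id.sub analyticAt_const)
  refine ⟨{y | q d (ψ₀ + σ y) = y ∧ |v0 y - x0| < δ}, ?_, fun z => (liftSeries _ p).sum (A z), ?_, ?_⟩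
  · have h1 : ∀ᶠ y in 𝓝 (q d ψ₀), |v0 y - x0| < δ := by
      have := v0.continuous.continuousAt (x := q d ψ₀)
      exact (Metric.continuousAt_iff'.mp this) δ hδ
    exact hσq.and h1
  · refine AnalyticAt.fun_comp (f := A) ?_ hAan
    rw [hA0]
    refine liftSeries_analytic hp ?_
    exact (ENNReal.ofReal_le_ofReal (by linarith)).trans_lt hδr
  · have h2 : ∀ᶠ z in 𝓝 ((v0, 0) : C(UnitAddTorus (Fin d), ℝ) × (Fin d → ℝ)), ‖A z‖ < 2 * δ := by
      have hc : ContinuousAt (fun z => ‖A z‖) (v0, 0) := hAan.continuousAt.norm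
      refine hc.eventually_lt continuousAt_const ?_
      rw [hA0]; linarith
    filter_upwards [h2] with z hz y hy
    obtain ⟨hy1, hy2⟩ := hy
    rw [liftSeries_sum hp ((ENNReal.ofReal_le_ofReal hz.le).trans_lt hδr)]
    rw [abs_lt] at hy2
    have e1 : A z y = (z.1 y - x0, σ y + z.2) := by
      simp only [hA, ContinuousMap.add_apply, hL, pairL_apply, hw0, ContinuousMap.coe_mk]
      rw [min_eq_right hy2.2.le, max_eq_right hy2.1.le]
      simp
    rw [e1]
    simp only [nem, ContinuousMap.coe_mk, Prod.mk_add_mk, add_sub_cancel, ← add_assoc]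
    rw [← hHq, map_add (q d), hy1]

end Nem

section Prep

variable {d : ℕ}

/-- the partial derivative in `x` -/
noncomputable def dx (h : ℝ → (Fin d → ℝ) → ℝ) (x : ℝ) (ψ : Fin d → ℝ) : ℝ :=
  fderiv ℝ (fun q : ℝ × (Fin d → ℝ) => h q.1 q.2) (x, ψ) (1, 0)

lemma dx_hasDeriv {h : ℝ → (Fin d → ℝ) → ℝ}
    (hh : ∀ p : ℝ × (Fin d → ℝ), AnalyticAt ℝ (fun q : ℝ × (Fin d → ℝ) => h q.1 q.2) p)
    (x : ℝ) (ψ : Fin d → ℝ) : HasDerivAt (fun x => h x ψ) (dx h x ψ) x := by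
  have h1 := (hh (x, ψ)).differentiableAt.hasFDerivAt
  have h2 : HasDerivAt (fun x : ℝ => (x, ψ)) ((1 : ℝ), (0 : Fin d → ℝ)) x :=
    (hasDerivAt_id x).prodMk (hasDerivAt_const x ψ)
  exact HasFDerivAt.comp_hasDerivAt x h1 h2

lemma dx_cont {h : ℝ → (Fin d → ℝ) → ℝ}
    (hh : ∀ p : ℝ × (Fin d → ℝ), AnalyticAt ℝ (fun q : ℝ × (Fin d → ℝ) => h q.1 q.2) p) :
    Continuous fun z : ℝ × (Fin d → ℝ) => dx h z.1 z.2 := by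
  have h1 : ContDiff ℝ 1 (fun q : ℝ × (Fin d → ℝ) => h q.1 q.2) :=
    contDiff_iff_contDiffAt.mpr fun p => (hh p).contDiffAt
  exact (h1.continuous_fderiv one_ne_zero).clm_apply continuous_const

lemma dx_per {h : ℝ → (Fin d → ℝ) → ℝ}
    (hh : ∀ p : ℝ × (Fin d → ℝ), AnalyticAt ℝ (fun q : ℝ × (Fin d → ℝ) => h q.1 q.2) p)
    (hhper : ∀ (x : ℝ) (ψ : Fin d → ℝ) (i : Fin d),
      h x (ψ + Pi.single i (2 * Real.pi)) = h x ψ) (x : ℝ) (ψ : Fin d → ℝ) (i : Fin d) :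
    dx h x (ψ + Pi.single i (2 * Real.pi)) = dx h x ψ := by
  have h1 := dx_hasDeriv hh x (ψ + Pi.single i (2 * Real.pi))
  simp only [hhper] at h1
  exact h1.unique (dx_hasDeriv hh x ψ)

/-- currying -/
noncomputable def cur {K : Type*} [TopologicalSpace K] (H : ℝ → K → ℝ)
    (hH : Continuous fun z : ℝ × K => H z.1 z.2) : C(ℝ, C(K, ℝ)) :=
  ContinuousMap.curry ⟨fun z : ℝ × K => H z.1 z.2, hH⟩

lemma cur_apply {K : Type*} [TopologicalSpace K] (H : ℝ → K → ℝ)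
    (hH : Continuous fun z : ℝ × K => H z.1 z.2) (x : ℝ) (y : K) : cur H hH x y = H x y := rfl

lemma remainder {K : Type*} [TopologicalSpace K] [CompactSpace K] {H Hx : ℝ → K → ℝ}
    (hHx : Continuous fun z : ℝ × K => Hx z.1 z.2)
    (hd : ∀ x y, HasDerivAt (fun x => H x y) (Hx x y) x) (c : ℝ) {κ : ℝ} (hκ : 0 < κ) :
    ∃ δ > 0, ∀ s t y, |s| ≤ δ → |t| ≤ δ →
      |H (c + s) y - H (c + t) y - Hx c y * (s - t)| ≤ κ * |s - t| := by
  have h1 := Metric.continuousAt_iff.mp ((cur Hx hHx).continuous.continuousAt (x := c)) κ hκ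
  obtain ⟨δ, hδ, h1⟩ := h1
  refine ⟨δ / 2, by positivity, fun s t y hs ht => ?_⟩
  have h2 : ∀ x ∈ Metric.closedBall c (δ / 2),
      HasDerivWithinAt (fun x => H x y - Hx c y * x) (Hx x y - Hx c y) (Metric.closedBall c (δ / 2)) x := by
    intro x _
    have := (hd x y).sub ((hasDerivAt_id x).const_mul (Hx c y))
    exact (HasDerivAt.congr_deriv this (by simp)).hasDerivWithinAt
  have h3 : ∀ x ∈ Metric.closedBall c (δ / 2), ‖Hx x y - Hx c y‖ ≤ κ := by
    intro x hx
    have h4 := h1 (x := x) (lt_of_le_of_lt hx (by linarith))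
    rw [dist_eq_norm] at h4
    exact (((cur Hx hHx x - cur Hx hHx c)).norm_coe_le_norm y).trans h4.le
  have h5 := (convex_closedBall c (δ / 2)).norm_image_sub_le_of_norm_hasDerivWithin_le h2 h3
    (x := c + t) (y := c + s) (by simpa using ht) (by simpa using hs)
  rw [Real.norm_eq_abs, Real.norm_eq_abs] at h5
  have e1 : c + s - (c + t) = s - t := by ring
  rw [e1] at h5
  refine le_trans (le_of_eq ?_) h5
  congr 1; ring

lemma cur_hasDeriv {K : Type*} [TopologicalSpace K] [CompactSpace K] {H Hx : ℝ → K → ℝ}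
    (hH : Continuous fun z : ℝ × K => H z.1 z.2)
    (hHx : Continuous fun z : ℝ × K => Hx z.1 z.2)
    (hd : ∀ x y, HasDerivAt (fun x => H x y) (Hx x y) x) (c : ℝ) :
    HasDerivAt (fun x => cur H hH x) (cur Hx hHx c) c := by
  rw [hasDerivAt_iff_isLittleO_nhds_zero, Asymptotics.isLittleO_iff]
  intro κ hκ
  obtain ⟨δ, hδ, h1⟩ := remainder hHx hd c hκ
  filter_upwards [Metric.closedBall_mem_nhds (0:ℝ) hδ] with s hs
  rw [ContinuousMap.norm_le _ (by positivity)]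
  intro y
  have h2 := h1 s 0 y (by simpa using hs) (by simpa using hδ.le)
  simp only [ContinuousMap.sub_apply, ContinuousMap.smul_apply, cur_apply, smul_eq_mul,
    Real.norm_eq_abs]
  simpa [mul_comm] using h2

lemma exists_mu {a ε M : ℝ} (hε : 0 < |ε|) (h1 : |ε| < 1) (h2 : |ε| * (4 * |a|) < 1)
    (h3 : |ε| * (2 * M) < 1) :
    ∃ μ₁ μ₂ : ℝ, μ₁ * μ₂ = a ∧ ε * (μ₁ + μ₂) = 1 ∧ M ≤ |μ₂| := by
  have hε0 : ε ≠ 0 := abs_pos.mp hε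
  have hD : 0 ≤ 1 - 4 * ε ^ 2 * a := by
    have : ε ^ 2 = |ε| ^ 2 := (sq_abs ε).symm
    have e : |ε| ^ 2 ≤ |ε| := by nlinarith
    have e2 : 4 * ε ^ 2 * a ≤ |ε| ^ 2 * (4 * |a|) := by
      rw [this]; nlinarith [le_abs_self a, sq_nonneg |ε|]
    nlinarith [abs_nonneg a]
  set r := √(1 - 4 * ε ^ 2 * a) with hr
  have hr2 : r * r = 1 - 4 * ε ^ 2 * a := Real.mul_self_sqrt hD
  have hr0 : 0 ≤ r := Real.sqrt_nonneg _
  refine ⟨(1 - r) / (2 * ε), (1 + r) / (2 * ε), ?_, ?_, ?_⟩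
  · field_simp; nlinarith
  · field_simp; ring
  · rw [abs_div, abs_of_nonneg (by linarith : 0 ≤ 1 + r), abs_mul, abs_two, le_div_iff₀ (by positivity)]
    nlinarith

lemma fix_exists {X : Type*} [NormedAddCommGroup X] [CompleteSpace X] (S : X → X) {ρ : ℝ}
    (hρ : 0 < ρ) (hS : ∀ v w, ‖v‖ ≤ ρ → ‖w‖ ≤ ρ → ‖S v - S w‖ ≤ 1 / 2 * ‖v - w‖)
    (h0 : ‖S 0‖ ≤ ρ / 4) : ∃ U, ‖U‖ < ρ ∧ S U = U := by
  have hmaps : Set.MapsTo S (Metric.closedBall 0 ρ) (Metric.closedBall 0 ρ) := by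
    intro v hv
    rw [mem_closedBall_zero_iff] at hv ⊢
    have h1 := hS v 0 hv (by simpa using hρ.le)
    rw [sub_zero] at h1
    have h2 : ‖S v‖ ≤ ‖S v - S 0‖ + ‖S 0‖ := norm_le_norm_sub_add _ _
    linarith
  have hc : ContractingWith (1 / 2) (hmaps.restrict S _ _) := by
    refine ⟨by rw [← NNReal.coe_lt_coe]; norm_num, ?_⟩
    refine LipschitzWith.of_dist_le_mul fun v w => ?_
    have := hS v w (mem_closedBall_zero_iff.mp v.2) (mem_closedBall_zero_iff.mp w.2)
    rw [Subtype.dist_eq, Subtype.dist_eq, dist_eq_norm, dist_eq_norm]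
    simpa using this
  obtain ⟨U, hU, hfix, -⟩ := hc.exists_fixedPoint' (Metric.isClosed_closedBall.isComplete) hmaps
    (x := 0) (by simpa using hρ.le) (edist_ne_top _ _)
  rw [mem_closedBall_zero_iff] at hU
  refine ⟨U, ?_, hfix⟩
  have h1 := hS U 0 hU (by simpa using hρ.le)
  rw [sub_zero] at h1
  have h2 : ‖S U‖ ≤ ‖S U - S 0‖ + ‖S 0‖ := norm_le_norm_sub_add _ _
  have h3 : S U = U := hfix
  rw [h3] at h1 h2
  linarith

end Prep

section Solve

variable {d : ℕ}

/-- for fixed parameters: from the operators to the solution -/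
lemma solve_fixed (ω : Fin d → ℝ) {h : ℝ → (Fin d → ℝ) → ℝ}
    (hh : ∀ p : ℝ × (Fin d → ℝ), AnalyticAt ℝ (fun q : ℝ × (Fin d → ℝ) => h q.1 q.2) p)
    {H : ℝ → UnitAddTorus (Fin d) → ℝ}
    (hH : Continuous fun z : ℝ × UnitAddTorus (Fin d) => H z.1 z.2)
    (hHq : ∀ x ψ, H x (q d ψ) = h x ψ)
    {a ε μ₁ μ₂ b ρ : ℝ} (hρ : 0 < ρ) (h1 : μ₁ ≠ 0) (h2 : μ₂ ≠ 0) (hμa : μ₁ * μ₂ = a)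
    (hμε : ε * (μ₁ + μ₂) = 1) (k g : C(UnitAddTorus (Fin d), ℝ)) (hkg : g = k - a • 1)
    (T : C(UnitAddTorus (Fin d), ℝ) →L[ℝ] C(UnitAddTorus (Fin d), ℝ))
    (hT : T = sol (flow ω) (flow_cont ω) h1 h2)
    (Bi : C(UnitAddTorus (Fin d), ℝ) →L[ℝ] C(UnitAddTorus (Fin d), ℝ))
    (hB1 : ∀ w, Bi w + T (proj (tvol d) (g * Bi w)) = w)
    (hB2 : ∀ w, Bi (w + T (proj (tvol d) (g * w))) = w)
    (S : C(UnitAddTorus (Fin d), ℝ) × (Fin d → ℝ) → C(UnitAddTorus (Fin d), ℝ))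
    (hSdef : ∀ z, S z = - Bi (T (proj (tvol d) (nem H hH (z.1 + b • 1, z.2) - k * z.1))))
    (hlip : ∀ v w, ‖v‖ ≤ ρ → ‖w‖ ≤ ρ → ‖S (v, 0) - S (w, 0)‖ ≤ 1 / 2 * ‖v - w‖)
    (hS0 : ‖S (0, 0)‖ ≤ ρ / 4) :
    ∃ (U U' U'' : C(UnitAddTorus (Fin d), ℝ)) (R : ℝ), mean (tvol d) U = 0 ∧
      (∀ ψ, AnalyticAt ℝ (fun ψ => U (q d ψ)) ψ) ∧ HasD (flow ω) U U' ∧ HasD (flow ω) U' U'' ∧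
      ∀ y, ε * U'' y + U' y + ε * H (b + U y) y = ε * R := by
  obtain ⟨U, hUρ, hU⟩ := fix_exists (fun v => S (v, 0)) hρ hlip hS0
  set N : C(UnitAddTorus (Fin d), ℝ) → (Fin d → ℝ) → C(UnitAddTorus (Fin d), ℝ) :=
    fun v θ => nem H hH (v + b • 1, θ) with hN
  have hNy : ∀ v θ y, N v θ y = H (v y + b) (y + q d θ) := by
    intro v θ y; simp [hN, nem]
  have hgw : ∀ w, g * w = k * w - a • w := by
    intro w; rw [hkg, sub_mul, smul_mul_assoc, one_mul]
  -- the original equation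
  have heq : U = - T (proj (tvol d) (N U 0 - a • U)) := by
    have e1 : Bi (- T (proj (tvol d) (N U 0 - k * U))) = U := by
      rw [map_neg]; rw [← hSdef (U, 0)]; exact hU
    have e2 := hB1 (- T (proj (tvol d) (N U 0 - k * U)))
    rw [e1, hgw] at e2
    have e3 : N U 0 - a • U = (N U 0 - k * U) + (k * U - a • U) := by abel
    rw [e3, map_add, map_add, neg_add, ← e2]
    abel
  -- translates
  set u : (Fin d → ℝ) → C(UnitAddTorus (Fin d), ℝ) := fun θ => tr (q d θ) U with hu
  have hfix : ∀ θ, S (u θ, θ) = u θ := by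
    intro θ
    have e1 : u θ = - T (proj (tvol d) (N (u θ) θ - a • u θ)) := by
      have e2 : tr (q d θ) (N U 0 - a • U) = N (u θ) θ - a • u θ := by
        ext y
        simp only [tr_apply, ContinuousMap.sub_apply, ContinuousMap.smul_apply, hNy, hu, map_zero,
          add_zero]
      rw [← e2, ← proj_tr, hT, ← sol_tr, ← hT]
      conv_lhs => rw [hu]
      simp only
      conv_lhs => rw [heq]
      rfl
    have e3 : u θ + T (proj (tvol d) (g * u θ)) = - T (proj (tvol d) (N (u θ) θ - k * u θ)) := by
      have e4 : N (u θ) θ - k * u θ = (N (u θ) θ - a • u θ) - g * u θ := by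
        rw [hgw]; abel
      rw [e4, map_sub, map_sub, neg_sub, sub_eq_add_neg, ← e1, add_comm]
    have e5 := hB2 (u θ)
    rw [e3, map_neg] at e5
    rw [hSdef]; exact e5
  have hu0 : u 0 = U := by ext y; simp [hu]
  have hSan : AnalyticAt ℝ S (u 0, 0) := by
    have e1 : S = fun z => (- (Bi.comp (T.comp (proj (tvol d)))))
        (nem H hH (z.1 + b • 1, z.2) - (ContinuousLinearMap.mul ℝ C(UnitAddTorus (Fin d), ℝ) k) z.1) := by
      funext z; rw [hSdef]; rfl
    rw [e1]
    refine AnalyticAt.fun_comp (ContinuousLinearMap.analyticAt _ _) ?_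
    refine AnalyticAt.sub ?_ ?_
    · refine AnalyticAt.fun_comp (f := fun z : C(UnitAddTorus (Fin d), ℝ) × (Fin d → ℝ) =>
        (z.1 + b • (1 : C(UnitAddTorus (Fin d), ℝ)), z.2)) (nem_analytic hh hH hHq _) ?_
      exact (analyticAt_fst.add analyticAt_const).prod analyticAt_snd
    · exact AnalyticAt.fun_comp (ContinuousLinearMap.analyticAt _ _) analyticAt_fst
  have hucont : Continuous u := by
    have : Continuous fun z : (Fin d → ℝ) × UnitAddTorus (Fin d) => U (z.2 + q d z.1) :=
      U.continuous.comp (continuous_snd.add (q_cont.comp continuous_fst))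
    exact (ContinuousMap.curry ⟨_, this⟩).continuous
  have huan : AnalyticAt ℝ u 0 := by
    refine fixedPoint_analytic hSan (s := Metric.ball 0 ρ) ?_ ?_ hucont.continuousAt hfix
    · rw [hu0]
      exact Metric.isOpen_ball.mem_nhds (by simpa using hUρ)
    · intro v hv w hw
      rw [mem_ball_zero_iff] at hv hw
      exact hlip v w hv.le hw.le
  -- the equation
  set f := - proj (tvol d) (N U 0 - a • U) with hf
  have hUf : U = T f := by rw [hf, map_neg]; exact heq
  obtain ⟨U', hU1, -, hU2⟩ := sol_spec1 (flow ω) (flow_cont ω) h1 h2 f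
  rw [← hT, ← hUf] at hU1 hU2
  refine ⟨U, U', _, mean (tvol d) (N U 0 - a • U), ?_, ?_, hU1, hU2, ?_⟩
  · rw [hUf, hT]
    refine mean_sol _ _ _ _ _ ?_
    rw [hf, map_neg, mean_proj, neg_zero]
  · intro ψ₀
    have e1 : (fun ψ => U (q d ψ)) =
        fun ψ => ContinuousMap.evalCLM ℝ (q d ψ₀) (u (ψ - ψ₀)) := by
      funext ψ
      have : q d ψ = q d ψ₀ + q d (ψ - ψ₀) := by rw [← map_add]; simp
      rw [this]; rfl
    rw [e1]
    refine AnalyticAt.fun_comp (ContinuousLinearMap.analyticAt _ _) ?_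
    refine AnalyticAt.fun_comp (f := fun ψ => ψ - ψ₀) ?_ (analyticAt_id.sub analyticAt_const)
    rw [sub_self]; exact huan
  · intro y
    have e1 : f y = - (H (b + U y) y - a * U y - mean (tvol d) (N U 0 - a • U)) := by
      rw [hf, proj_apply]
      simp only [ContinuousMap.neg_apply, ContinuousMap.sub_apply, ContinuousMap.smul_apply, hNy,
        smul_eq_mul, ContinuousMap.one_apply, mul_one, map_zero, add_zero, add_comm b]
    simp only [ContinuousMap.sub_apply, ContinuousMap.smul_apply, smul_eq_mul]
    rw [e1, hμa]
    linear_combination (- U' y) * hμε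

lemma solve (ω : Fin d → ℝ) (hω : ∀ ν : Fin d → ℤ, ν ≠ 0 → (∑ i, ω i * (ν i : ℝ)) ≠ 0)
    {h : ℝ → (Fin d → ℝ) → ℝ}
    (hh : ∀ p : ℝ × (Fin d → ℝ), AnalyticAt ℝ (fun q : ℝ × (Fin d → ℝ) => h q.1 q.2) p)
    {H Hx : ℝ → UnitAddTorus (Fin d) → ℝ}
    (hH : Continuous fun z : ℝ × UnitAddTorus (Fin d) => H z.1 z.2)
    (hHq : ∀ x ψ, H x (q d ψ) = h x ψ)
    (hHx : Continuous fun z : ℝ × UnitAddTorus (Fin d) => Hx z.1 z.2)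
    (hder : ∀ x y, HasDerivAt (fun x => H x y) (Hx x y) x) (c : ℝ) {a : ℝ} (ha : a ≠ 0)
    (ham : mean (tvol d) (cur Hx hHx c) = a) :
    ∃ εb > (0 : ℝ), ∃ ζb > (0 : ℝ), ∀ ε : ℝ, 0 < |ε| → |ε| < εb → ∀ ζ : ℝ, |ζ| < ζb →
    ∃ (U U' U'' : C(UnitAddTorus (Fin d), ℝ)) (R : ℝ), mean (tvol d) U = 0 ∧
      (∀ ψ, AnalyticAt ℝ (fun ψ => U (q d ψ)) ψ) ∧ HasD (flow ω) U U' ∧ HasD (flow ω) U' U'' ∧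
      ∀ y, ε * U'' y + U' y + ε * H (c + ζ + U y) y = ε * R := by
  set k := cur Hx hHx c with hk
  set g := k - a • (1 : C(UnitAddTorus (Fin d), ℝ)) with hg
  have hgm : mean (tvol d) g = 0 := by rw [hg, map_sub, map_smul, mean_one, ham]; simp
  have ha' : 0 < |a| := abs_pos.mpr ha
  set C0 := 2 * (1 + 2 * ‖g‖ / |a|) with hC0
  have hC0p : 0 < C0 := by positivity
  set L := C0 * (2 / |a|) with hL
  have hLp : 0 < L := by positivity
  set κ := 1 / (2 * L) with hκ
  have hκp : 0 < κ := by positivity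
  obtain ⟨δ, hδ, hrem⟩ := remainder hHx hder c hκp
  set ρ := δ / 2 with hρ
  have hρp : 0 < ρ := by positivity
  set Q := L * (κ + ‖k‖) + 1 with hQ
  have hQp : 0 < Q := by positivity
  obtain ⟨M, hM, hop⟩ := main_op (tvol d) (flow ω) (flow_cont ω)
    (fun f hf δ hδ => approx ω hω f hf δ hδ) ha g (cur H hH c) hgm (ρ / (8 * C0)) (by positivity)
  refine ⟨min 1 (min (1 / (4 * |a|)) (1 / (2 * M))), by positivity, min ρ (ρ / (8 * Q)),
    by positivity, fun ε hε0 hε ζ hζ => ?_⟩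
  rw [lt_min_iff, lt_min_iff, lt_div_iff₀ (by positivity), lt_div_iff₀ (by positivity)] at hε
  rw [lt_min_iff] at hζ
  have hζ2 := (lt_div_iff₀ (by positivity)).mp hζ.2
  obtain ⟨μ₁, μ₂, hμa, hμε, hμM⟩ := exists_mu hε0 hε.1 hε.2.1 hε.2.2
  have h1 : μ₁ ≠ 0 := by rintro rfl; exact ha (by rw [← hμa]; ring)
  have h2 : μ₂ ≠ 0 := by rintro rfl; exact ha (by rw [← hμa]; ring)
  obtain ⟨hsm, Bi, hB1, hB2, hB3⟩ := hop μ₁ μ₂ h1 h2 hμa hμM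
  set T := sol (flow ω) (flow_cont ω) h1 h2 with hT
  have hBT : ∀ f, ‖Bi (T (proj (tvol d) f))‖ ≤ L * ‖f‖ := by
    intro f
    have e1 := sol_proj_bound (tvol d) (flow ω) (flow_cont ω) h1 h2 f
    rw [hμa] at e1
    calc _ ≤ C0 * ‖T (proj (tvol d) f)‖ := hB3 _
      _ ≤ C0 * (2 * ‖f‖ / |a|) := by gcongr
      _ = _ := by rw [hL]; ring
  have hrem' : ∀ (v w : C(UnitAddTorus (Fin d), ℝ)), ‖v‖ ≤ ρ → ‖w‖ ≤ ρ →
      ‖(nem H hH (v + (c + ζ) • 1, 0) - k * v) - (nem H hH (w + (c + ζ) • 1, 0) - k * w)‖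
        ≤ κ * ‖v - w‖ := by
    intro v w hv hw
    rw [ContinuousMap.norm_le _ (by positivity)]
    intro y
    have b1 : ∀ v : C(UnitAddTorus (Fin d), ℝ), ‖v‖ ≤ ρ → |ζ + v y| ≤ δ := by
      intro v hv
      have := v.norm_coe_le_norm y
      rw [Real.norm_eq_abs] at this
      have := abs_add_le ζ (v y)
      linarith [hζ.1]
    have e1 := hrem (ζ + v y) (ζ + w y) y (b1 v hv) (b1 w hw)
    have e2 : |ζ + v y - (ζ + w y)| ≤ ‖v - w‖ := by
      have := (v - w).norm_coe_le_norm y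
      rw [Real.norm_eq_abs] at this
      simpa using this
    have e3 : ((nem H hH (v + (c + ζ) • 1, 0) - k * v) - (nem H hH (w + (c + ζ) • 1, 0) - k * w)) y
        = H (c + (ζ + v y)) y - H (c + (ζ + w y)) y - Hx c y * (ζ + v y - (ζ + w y)) := by
      simp only [nem, ContinuousMap.sub_apply, ContinuousMap.coe_mk, ContinuousMap.add_apply,
        ContinuousMap.smul_apply, ContinuousMap.one_apply, ContinuousMap.mul_apply, map_zero,
        add_zero, smul_eq_mul, mul_one, hk, cur_apply]
      rw [show v y + (c + ζ) = c + (ζ + v y) by ring, show w y + (c + ζ) = c + (ζ + w y) by ring]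
      ring
    rw [e3, Real.norm_eq_abs]
    exact e1.trans (by gcongr)
  refine solve_fixed ω hh hH hHq (b := c + ζ) hρp h1 h2 hμa hμε k g hg T hT Bi hB1 hB2
    (fun z => - Bi (T (proj (tvol d) (nem H hH (z.1 + (c + ζ) • 1, z.2) - k * z.1)))) (fun z => rfl)
    ?_ ?_
  · intro v w hv hw
    have e1 : (- Bi (T (proj (tvol d) (nem H hH (v + (c + ζ) • 1, 0) - k * v)))) -
        (- Bi (T (proj (tvol d) (nem H hH (w + (c + ζ) • 1, 0) - k * w)))) =
        - Bi (T (proj (tvol d) ((nem H hH (v + (c + ζ) • 1, 0) - k * v)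
          - (nem H hH (w + (c + ζ) • 1, 0) - k * w)))) := by
      rw [map_sub (proj (tvol d)) (nem H hH (v + (c + ζ) • 1, 0) - k * v), map_sub T, map_sub Bi]
      abel
    simp only
    rw [e1, norm_neg]
    calc _ ≤ L * _ := hBT _
      _ ≤ L * (κ * ‖v - w‖) := by gcongr; exact hrem' v w hv hw
      _ = _ := by rw [hκ]; field_simp
  · have e1 : nem H hH ((0 : C(UnitAddTorus (Fin d), ℝ)) + (c + ζ) • 1, 0) - k * 0 =
        cur H hH c + (cur H hH (c + ζ) - cur H hH c) := by
      ext y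
      simp [nem, cur_apply]
    have e2 : ‖cur H hH (c + ζ) - cur H hH c‖ ≤ (κ + ‖k‖) * |ζ| := by
      rw [ContinuousMap.norm_le _ (by positivity)]
      intro y
      have f1 := hrem ζ 0 y (by linarith [hζ.1]) (by simpa using hδ.le)
      have f2 := k.norm_coe_le_norm y
      rw [sub_zero, add_zero] at f1
      rw [Real.norm_eq_abs] at f2 ⊢
      have f3 : (cur H hH (c + ζ) - cur H hH c) y =
        (H (c + ζ) y - H c y - Hx c y * ζ) + k y * ζ := by
        simp [cur_apply, hk]
      rw [f3]
      calc _ ≤ _ := abs_add_le _ _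
        _ ≤ κ * |ζ| + ‖k‖ * |ζ| := by rw [abs_mul]; gcongr
        _ = _ := by ring
    simp only
    rw [e1, norm_neg, map_add, map_add, map_add]
    have e3 : ‖Bi (T (proj (tvol d) (cur H hH c)))‖ ≤ ρ / 8 := by
      calc _ ≤ C0 * _ := hB3 _
        _ ≤ C0 * (ρ / (8 * C0)) := by gcongr
        _ = _ := by field_simp
    have e4 : ‖Bi (T (proj (tvol d) (cur H hH (c + ζ) - cur H hH c)))‖ ≤ ρ / 8 := by
      calc _ ≤ L * _ := hBT _
        _ ≤ L * ((κ + ‖k‖) * |ζ|) := by gcongr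
        _ ≤ Q * |ζ| := by rw [← mul_assoc]; gcongr; linarith
        _ ≤ _ := by linarith [hζ2]
    exact (norm_add_le _ _).trans (by linarith)

end Solve

end RangeEq

/-- **Solvability of the range equation for `ε x'' + x' + ε h(x, ωt) = 0`.**
For nonresonant `ω`, `h` real analytic and `2π`-periodic in each of the last `d`
coordinates, with `h₀(c₀) = 0` and `a := h₀'(c₀) ≠ 0`, there are `ε̄, ζ̄ > 0` such that
for every `0 < |ε| < ε̄` and every `|ζ| < ζ̄` there exist a real analytic, periodic,
zero-mean `u` and a constant `R` such that `x(t) = c₀ + ζ + u(ωt)` satisfies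
`ε x'' + x' + ε h(x, ωt) = ε R` for all `t`. -/
theorem range_equation_solvable_general
    (d : ℕ) (hd : 1 ≤ d) (ω : Fin d → ℝ)
    (hω : ∀ ν : Fin d → ℤ, ν ≠ 0 → (∑ i, ω i * (ν i : ℝ)) ≠ 0)
    (h : ℝ → (Fin d → ℝ) → ℝ)
    (hh : ∀ p : ℝ × (Fin d → ℝ), AnalyticAt ℝ (fun q : ℝ × (Fin d → ℝ) => h q.1 q.2) p)
    (hhper : ∀ (x : ℝ) (ψ : Fin d → ℝ) (i : Fin d),
      h x (ψ + Pi.single i (2 * Real.pi)) = h x ψ)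
    (h₀ : ℝ → ℝ)
    (hh₀ : ∀ x : ℝ, h₀ x = ((2 * Real.pi) ^ d)⁻¹ *
      ∫ ψ in Set.Icc (0 : Fin d → ℝ) (fun _ => 2 * Real.pi), h x ψ)
    (c₀ : ℝ) (hzero : h₀ c₀ = 0) (ha : deriv h₀ c₀ ≠ 0) :
    ∃ εb > (0 : ℝ), ∃ ζb > (0 : ℝ),
      ∀ ε : ℝ, 0 < |ε| → |ε| < εb → ∀ ζ : ℝ, |ζ| < ζb →
        ∃ (u : (Fin d → ℝ) → ℝ) (R : ℝ),
          (∀ ψ : Fin d → ℝ, AnalyticAt ℝ u ψ) ∧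
          (∀ (ψ : Fin d → ℝ) (i : Fin d), u (ψ + Pi.single i (2 * Real.pi)) = u ψ) ∧
          (((2 * Real.pi) ^ d)⁻¹ *
            ∫ ψ in Set.Icc (0 : Fin d → ℝ) (fun _ => 2 * Real.pi), u ψ) = 0 ∧
          (∀ t : ℝ,
            ε * deriv (deriv (fun s : ℝ => c₀ + ζ + u (s • ω))) t
              + deriv (fun s : ℝ => c₀ + ζ + u (s • ω)) t
              + ε * h (c₀ + ζ + u (t • ω)) (t • ω)
              = ε * R) := by
  have hcont : Continuous fun z : ℝ × (Fin d → ℝ) => h z.1 z.2 :=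
    continuous_iff_continuousAt.mpr fun p => (hh p).continuousAt
  obtain ⟨H, hH, hHq⟩ := RangeEq.exists_lift hcont hhper
  obtain ⟨Hx, hHx, hHxq⟩ := RangeEq.exists_lift (RangeEq.dx_cont hh) (RangeEq.dx_per hh hhper)
  have hder : ∀ x y, HasDerivAt (fun x => H x y) (Hx x y) x := by
    intro x y
    obtain ⟨ψ, rfl⟩ := RangeEq.q_open.surjective (f := RangeEq.q d) y
    simp only [hHq, hHxq]
    exact RangeEq.dx_hasDeriv hh x ψ
  have hh₀' : h₀ = fun x => RangeEq.mean (RangeEq.tvol d) (RangeEq.cur H hH x) := by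
    funext x
    rw [hh₀, RangeEq.mean_apply]
    simp only [RangeEq.cur_apply]
    rw [← RangeEq.integral_torus]
    simp only [hHq]
  have ham : RangeEq.mean (RangeEq.tvol d) (RangeEq.cur Hx hHx c₀) = deriv h₀ c₀ := by
    have h1 := (RangeEq.mean (RangeEq.tvol d)).hasFDerivAt.comp_hasDerivAt c₀
      (RangeEq.cur_hasDeriv hH hHx hder c₀)
    rw [hh₀']
    exact h1.deriv.symm
  obtain ⟨εb, hεb, ζb, hζb, key⟩ := RangeEq.solve ω hω hh hH hHq hHx hder c₀ ha ham
  refine ⟨εb, hεb, ζb, hζb, fun ε hε0 hε ζ hζ => ?_⟩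
  obtain ⟨U, U', U'', R, hm, han, hU, hU', heq⟩ := key ε hε0 hε ζ hζ
  refine ⟨fun ψ => U (RangeEq.q d ψ), R, han, ?_, ?_, ?_⟩
  · intro ψ i
    simp only
    rw [map_add, RangeEq.q_single, add_zero]
  · rw [RangeEq.integral_torus (fun y => U y), ← RangeEq.mean_apply, hm]
  · intro t
    have d1 : ∀ s : ℝ, HasDerivAt (fun s : ℝ => c₀ + ζ + U (RangeEq.q d (s • ω)))
        (U' (RangeEq.q d (s • ω))) s := by
      intro s
      have := hU 0 s
      simp only [zero_add, RangeEq.flow_apply] at this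
      exact this.const_add (c₀ + ζ)
    have d2 : HasDerivAt (fun s : ℝ => U' (RangeEq.q d (s • ω))) (U'' (RangeEq.q d (t • ω))) t := by
      have := hU' 0 t
      simp only [zero_add, RangeEq.flow_apply] at this
      exact this
    have e1 : deriv (fun s : ℝ => c₀ + ζ + U (RangeEq.q d (s • ω))) =
        fun s => U' (RangeEq.q d (s • ω)) := funext fun s => (d1 s).deriv
    rw [e1, d2.deriv, ← hHq]
    exact heq (RangeEq.q d (t • ω))
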